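/- arXiv:2102.02280 — 5 statements merged into one kernel-verified Lean document; each statement's English description precedes it below -/
import Mathlib

section
/- Fix t > 0, and for real Δ ≠ 0 let Re P(1+iΔ) = lim_{u→∞} ∑_{p ≤ u, p prime} cos(Δ log p)/p (this limit exists for Δ ≠ 0) and Re P_t(1+iΔ) = ∑_{p ≤ t, p prime} cos(Δ log p)/p. Then lim_{T→∞} (1/T) ∫_0^T ( Re P_t(1+iΔ) − Re P(1+iΔ) )² dΔ = (1/2) ∑_{p > t, p prime} 1/p² = (P(2) − P_t(2))/2, which tends to 0 as t → ∞. -/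
open MeasureTheory Filter Real

/-- The set of primes `p ≤ t`. -/
noncomputable def primesUpTo (t : ℝ) : Finset ℕ :=
  (Finset.range (⌊t⌋₊ + 1)).filter Nat.Prime

/-- The tail sum `(1/2) ∑_{p > t} 1/p²`. -/
noncomputable def tailSum (t : ℝ) : ℝ :=
  (1 / 2) * ∑' p : Nat.Primes, if t < ((p : ℕ) : ℝ) then 1 / ((p : ℕ) : ℝ) ^ 2 else 0

lemma bonf (v : Finset ℕ) (m : ℕ) :
    (if v = ∅ then (1:ℝ) else 0) ≤
      ∑ D ∈ v.powerset, (if D.card ≤ 2 * m then (-1:ℝ) ^ D.card else 0) := by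
  rw [Finset.sum_powerset_apply_card (fun k => if k ≤ 2 * m then (-1:ℝ) ^ k else 0)]
  by_cases hv : v = ∅
  · simp [hv]
  · rw [if_neg hv]
    obtain ⟨n, hn⟩ : ∃ n, v.card = n + 1 :=
      ⟨v.card - 1, by have := Finset.card_pos.mpr (Finset.nonempty_iff_ne_empty.mpr hv); omega⟩
    rw [hn]
    have h1 : ∑ k ∈ Finset.range (n + 1 + 1), (n + 1).choose k • (if k ≤ 2 * m then (-1:ℝ) ^ k else 0)
        = ∑ k ∈ Finset.range (2 * m + 1), ((-1:ℝ) ^ k * (n + 1).choose k) := by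
      have e1 : ∑ k ∈ Finset.range (n + 1 + 1), (n + 1).choose k • (if k ≤ 2 * m then (-1:ℝ) ^ k else 0)
         = ∑ k ∈ Finset.range (n + 1 + 1 + 2 * m), (n + 1).choose k • (if k ≤ 2 * m then (-1:ℝ) ^ k else 0) := by
        apply Finset.sum_subset
        · intro x; simp; omega
        · intro x _ hx
          simp only [Finset.mem_range, not_lt] at hx
          rw [Nat.choose_eq_zero_of_lt (by omega)]; simp
      have e2 : ∑ k ∈ Finset.range (2 * m + 1), ((-1:ℝ) ^ k * (n + 1).choose k)
         = ∑ k ∈ Finset.range (2 * m + 1), (n + 1).choose k • (if k ≤ 2 * m then (-1:ℝ) ^ k else 0) := by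
        apply Finset.sum_congr rfl
        intro k hk
        rw [Finset.mem_range] at hk
        rw [if_pos (by omega), nsmul_eq_mul, mul_comm]
      rw [e1, e2]
      symm
      apply Finset.sum_subset
      · intro x; simp; omega
      · intro x _ hx
        simp only [Finset.mem_range, not_lt] at hx
        rw [if_neg (by omega)]; simp
    rw [h1]
    have := @Int.alternating_sum_range_choose_eq_choose n (2 * m)
    have h2 : ∑ k ∈ Finset.range (2 * m + 1), ((-1:ℝ) ^ k * (n + 1).choose k) = (-1) ^ (2*m) * n.choose (2*m) := by
      exact_mod_cast this
    rw [h2, pow_mul]; simp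

lemma count_dvd (a H d : ℕ) (hd : 0 < d) :
    |(((Finset.Ioc a (a + H)).filter (fun n => d ∣ n)).card : ℝ) - (H : ℝ) / d| ≤ 1 := by
  have h : ((Finset.Ioc a (a + H)).filter (fun n => d ∣ n)).card + a / d = (a + H) / d := by
    rw [← Nat.Ioc_filter_dvd_card_eq_div a, ← Nat.Ioc_filter_dvd_card_eq_div (a + H),
      ← Finset.card_union_of_disjoint]
    · congr 1
      ext x; simp only [Finset.mem_union, Finset.mem_filter, Finset.mem_Ioc]
      constructor
      · rintro (h | h) <;> refine ⟨⟨?_, ?_⟩, h.2⟩ <;> omega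
      · rintro ⟨h, h'⟩
        by_cases hx : x ≤ a
        · right; exact ⟨⟨h.1, hx⟩, h'⟩
        · left; exact ⟨⟨by omega, h.2⟩, h'⟩
    · rw [Finset.disjoint_left]
      intro x; simp only [Finset.mem_filter, Finset.mem_Ioc]; intro h1 h2; omega
  have hd' : (0:ℝ) < d := by exact_mod_cast hd
  have h' : (((Finset.Ioc a (a + H)).filter (fun n => d ∣ n)).card : ℝ) = (((a + H) / d : ℕ) : ℝ) - ((a / d : ℕ) : ℝ) := by
    rw [← h]; push_cast; ring
  rw [h']
  have u1 : (((a + H) / d : ℕ) : ℝ) ≤ (a + H : ℝ) / d := by exact_mod_cast Nat.cast_div_le (α := ℝ) (m := a + H) (n := d)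
  have u2 : ((a / d : ℕ) : ℝ) ≤ (a : ℝ) / d := Nat.cast_div_le
  have l1 : (a + H : ℝ) / d < (((a + H) / d : ℕ) : ℝ) + 1 := by
    rw [div_lt_iff₀ hd']; 
    have := Nat.lt_div_mul_add (a := a + H) hd
    have : a + H < ((a + H) / d + 1) * d := by nlinarith
    exact_mod_cast this
  have l2 : (a : ℝ) / d < ((a / d : ℕ) : ℝ) + 1 := by
    rw [div_lt_iff₀ hd']; 
    have := Nat.lt_div_mul_add (a := a) hd
    have : a < (a / d + 1) * d := by nlinarith
    exact_mod_cast this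
  rw [add_div] at u1 l1
  rw [abs_le]; constructor <;> linarith

lemma merten (r : ℕ) (hr : 1 ≤ r) :
    ∏ p ∈ (2 ^ r : ℕ).primesBelow, (1 - 1 / (p:ℝ)) ≤ 2 / r := by
  let f : ℕ →* ℝ := { toFun := fun n => (n:ℝ)⁻¹, map_one' := by simp, map_mul' := by intro x y; push_cast; rw [mul_inv] }
  have hf : ∀ {p : ℕ}, p.Prime → ‖f p‖ < 1 := by
    intro p hp
    have : (1:ℝ) < p := by exact_mod_cast hp.one_lt
    simp only [f, MonoidHom.coe_mk, OneHom.coe_mk, norm_inv, Real.norm_natCast]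
    exact inv_lt_one_of_one_lt₀ this
  obtain ⟨hs, hsum⟩ := EulerProduct.summable_and_hasSum_smoothNumbers_prod_primesBelow_geometric hf (2 ^ r)
  have hlow : Real.log (2 ^ r : ℕ) ≤ ∏ p ∈ (2 ^ r : ℕ).primesBelow, (1 - f p)⁻¹ := by
    have h1 : Real.log (2 ^ r : ℕ) ≤ ∑ i ∈ Finset.Icc (1:ℕ) (2 ^ r - 1), ((i:ℕ):ℝ)⁻¹ := by
      have := log_add_one_le_harmonic (2 ^ r - 1)
      rw [harmonic_eq_sum_Icc] at this
      have e : (2 ^ r - 1 : ℕ) + 1 = 2 ^ r := Nat.sub_add_cancel Nat.one_le_two_pow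
      rw [e] at this
      push_cast at this ⊢
      exact this
    refine h1.trans ?_
    have hm : ∀ i ∈ Finset.Icc (1:ℕ) (2 ^ r - 1), i ∈ (2 ^ r).smoothNumbers := by
      intro i hi
      rw [Finset.mem_Icc] at hi
      exact Nat.mem_smoothNumbers_of_lt hi.1 (by have := Nat.one_le_two_pow (n := r); omega)
    have h2 := hsum.summable.sum_le_tsum ((Finset.Icc 1 (2 ^ r - 1)).subtype (· ∈ (2 ^ r).smoothNumbers))
      (fun i _ => by simp [f])
    rw [hsum.tsum_eq] at h2
    refine le_trans (le_of_eq ?_) h2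
    rw [Finset.sum_subtype_of_mem (fun i : ℕ => (i:ℝ)⁻¹) hm |>.symm]
    rfl
  have hl2 : (r:ℝ) / 2 ≤ ∏ p ∈ (2 ^ r : ℕ).primesBelow, (1 - f p)⁻¹ := by
    refine le_trans ?_ hlow
    push_cast; rw [Real.log_pow]
    have := Real.log_two_gt_d9
    have : (0:ℝ) ≤ r := by positivity
    nlinarith
  rw [Finset.prod_inv_distrib] at hl2
  have hr' : (0:ℝ) < r := by exact_mod_cast hr
  have := inv_anti₀ (by positivity) hl2
  rw [inv_inv, inv_div] at this
  simpa [f] using this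

lemma sumrec (r : ℕ) : ∑ p ∈ (2 ^ r : ℕ).primesBelow, 1 / (p:ℝ) ≤ 1 + r * Real.log 2 := by
  have := harmonic_le_one_add_log (2 ^ r)
  rw [harmonic_eq_sum_Icc] at this
  push_cast at this
  rw [Real.log_pow] at this
  refine le_trans ?_ this
  simp only [one_div]
  apply Finset.sum_le_sum_of_subset_of_nonneg
  · intro p hp
    have := Nat.mem_primesBelow.mp hp
    rw [Finset.mem_Icc]; exact ⟨this.2.one_lt.le, this.1.le⟩
  · intros; positivity

lemma rankin (r : ℕ) : ∏ p ∈ (2 ^ r : ℕ).primesBelow, (1 + 2 / (p:ℝ)) ≤ 8 * 4 ^ r := by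
  have h := Real.prod_one_add_le_exp_sum (2 ^ r : ℕ).primesBelow (f := fun p => 2 / (p:ℝ)) (by intro i; positivity)
  refine h.trans ?_
  have h2 : ∑ p ∈ (2 ^ r : ℕ).primesBelow, 2 / (p:ℝ) = 2 * ∑ p ∈ (2 ^ r : ℕ).primesBelow, 1 / (p:ℝ) := by
    rw [Finset.mul_sum]; apply Finset.sum_congr rfl; intros; ring
  rw [h2]
  have h3 := sumrec r
  calc Real.exp _ ≤ Real.exp (2 + r * (2 * Real.log 2)) := Real.exp_le_exp.mpr (by linarith)
    _ = Real.exp 1 ^ 2 * 4 ^ r := by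
      rw [Real.exp_add, Real.exp_nat_mul, two_mul (Real.log 2), Real.exp_add, Real.exp_log (by norm_num)]
      rw [← Real.exp_nat_mul]; norm_num
    _ ≤ 8 * 4 ^ r := by
      gcongr
      have := Real.exp_one_lt_d9
      have := Real.exp_pos 1
      nlinarith

lemma sieve (a H r : ℕ) (hr : 1 ≤ r) (ha : 2 ^ r ≤ a) (hH : 2 ^ (9 * r ^ 2) ≤ H) :
    (((Finset.Ioc a (a + H)).filter Nat.Prime).card : ℝ) ≤ 11 * H / r := by
  classical
  set P := (2 ^ r : ℕ).primesBelow with hP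
  have hPp : ∀ p ∈ P, p.Prime := fun p hp => (Nat.mem_primesBelow.mp hp).2
  set c : Finset ℕ → ℝ := fun D => if D.card ≤ 2 * (2 * r) then (-1:ℝ) ^ D.card else 0 with hc
  have hr' : (1:ℝ) ≤ r := by exact_mod_cast hr
  have h1 : (((Finset.Ioc a (a + H)).filter Nat.Prime).card : ℝ) ≤
      ∑ n ∈ Finset.Ioc a (a + H), ∑ D ∈ (P.filter (· ∣ n)).powerset, c D := by
    rw [Finset.card_filter]
    push_cast
    apply Finset.sum_le_sum
    intro n hn
    rw [Finset.mem_Ioc] at hn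
    refine le_trans ?_ (bonf _ _)
    by_cases hp : n.Prime
    · rw [if_pos hp, if_pos]
      rw [Finset.filter_eq_empty_iff]
      intro p hpP hpn
      have := (Nat.prime_dvd_prime_iff_eq (hPp p hpP) hp).mp hpn
      have := (Nat.mem_primesBelow.mp hpP).1
      omega
    · rw [if_neg hp]; split_ifs <;> norm_num
  have h2 : ∑ n ∈ Finset.Ioc a (a + H), ∑ D ∈ (P.filter (· ∣ n)).powerset, c D
      = ∑ D ∈ P.powerset, c D * (((Finset.Ioc a (a + H)).filter (fun n => (∏ p ∈ D, p) ∣ n)).card : ℝ) := by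
    have : ∀ n, ∑ D ∈ (P.filter (· ∣ n)).powerset, c D = ∑ D ∈ P.powerset, if (∏ p ∈ D, p) ∣ n then c D else 0 := by
      intro n
      refine Eq.trans ?_ (Finset.sum_filter _ _)
      apply Finset.sum_congr _ (fun _ _ => rfl)
      ext D
      simp only [Finset.mem_powerset, Finset.mem_filter, Finset.subset_iff]
      constructor
      · intro h
        refine ⟨fun x hx => (h hx).1, ?_⟩
        exact Finset.prod_primes_dvd n (fun p hp => (hPp p (h hp).1).prime) (fun p hp => (h hp).2)
      · rintro ⟨h, h'⟩ x hx
        exact ⟨h hx, (Finset.dvd_prod_of_mem _ hx).trans h'⟩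
    simp_rw [this]
    rw [Finset.sum_comm]
    apply Finset.sum_congr rfl
    intro D _
    rw [← Finset.sum_filter, Finset.sum_const, nsmul_eq_mul, mul_comm]
  rw [h2] at h1
  set K := P.powerset.filter (fun D => D.card ≤ 4 * r) with hK
  have h3 : ∀ D ∈ P.powerset, c D * (((Finset.Ioc a (a + H)).filter (fun n => (∏ p ∈ D, p) ∣ n)).card : ℝ)
      ≤ H * (∏ p ∈ D, (-(1 / (p:ℝ)))) + H * ((1/2) ^ (4 * r) * ∏ p ∈ D, (2 / (p:ℝ)))
        + (if D.card ≤ 4 * r then 1 else 0) := by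
    intro D hD
    rw [Finset.mem_powerset] at hD
    have hpos : 0 < ∏ p ∈ D, p := Finset.prod_pos (fun p hp => (hPp p (hD hp)).pos)
    have hcd := count_dvd a H _ hpos
    set X : ℝ := (((Finset.Ioc a (a + H)).filter (fun n => (∏ p ∈ D, p) ∣ n)).card : ℝ)
    have e1 : ∏ p ∈ D, (-(1 / (p:ℝ))) = (-1) ^ D.card * (1 / ((∏ p ∈ D, p : ℕ) : ℝ)) := by
      have : ∀ p ∈ D, (-(1 / (p:ℝ))) = (-1) * (1 / (p:ℝ)) := by intros; ring
      rw [Finset.prod_congr rfl this, Finset.prod_mul_distrib, Finset.prod_const]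
      simp
    have e2 : ∏ p ∈ D, (2 / (p:ℝ)) = 2 ^ D.card * (1 / ((∏ p ∈ D, p : ℕ) : ℝ)) := by
      have : ∀ p ∈ D, (2 / (p:ℝ)) = 2 * (1 / (p:ℝ)) := by intros; ring
      rw [Finset.prod_congr rfl this, Finset.prod_mul_distrib, Finset.prod_const]
      simp
    rw [e1, e2]
    set y : ℝ := ((∏ p ∈ D, p : ℕ) : ℝ)
    have hy : 0 < y := Nat.cast_pos.mpr hpos
    have hHy : 0 ≤ (H:ℝ) / y := by positivity
    have hab := abs_le.mp hcd
    by_cases hcard : D.card ≤ 4 * r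
    · have hcD : c D = (-1) ^ D.card := by
        simp only [hc]; rw [if_pos (by omega)]
      rw [hcD, if_pos hcard]
      have t1 : 0 ≤ H * ((1/2 : ℝ) ^ (4 * r) * (2 ^ D.card * (1 / y))) := by positivity
      have t2 : (H:ℝ) * ((-1) ^ D.card * (1 / y)) = (-1) ^ D.card * (H / y) := by ring
      rw [t2]
      rcases neg_one_pow_eq_or ℝ D.card with h | h <;> rw [h] <;> linarith
    · have hcD : c D = 0 := by
        simp only [hc]; rw [if_neg (by omega)]
      rw [hcD, if_neg hcard]
      have t2 : (H:ℝ) * ((-1) ^ D.card * (1 / y)) = (-1) ^ D.card * (H / y) := by ring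
      have t3 : H * ((1/2 : ℝ) ^ (4 * r) * (2 ^ D.card * (1 / y))) = ((1/2 : ℝ) ^ (4 * r) * 2 ^ D.card) * (H / y) := by ring
      have t4 : 1 ≤ ((1/2 : ℝ) ^ (4 * r) * 2 ^ D.card) := by
        have : (2:ℝ) ^ (4 * r) ≤ 2 ^ D.card := pow_le_pow_right₀ (by norm_num) (by omega)
        calc (1:ℝ) = (1/2 : ℝ) ^ (4 * r) * 2 ^ (4 * r) := by rw [← mul_pow]; norm_num
          _ ≤ _ := by gcongr
      rw [t2, t3]
      rcases neg_one_pow_eq_or ℝ D.card with h | h <;> rw [h] <;> nlinarith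
  have h4 := h1.trans (Finset.sum_le_sum h3)
  rw [Finset.sum_add_distrib, Finset.sum_add_distrib, ← Finset.mul_sum, ← Finset.mul_sum, ← Finset.mul_sum,
    ← Finset.prod_one_add, ← Finset.prod_one_add, ← Finset.sum_filter, Finset.sum_const, nsmul_eq_mul, mul_one] at h4
  have m1 := merten r hr
  have m2 := rankin r
  have e3 : ∏ i ∈ P, (1 + -(1 / (i:ℝ))) = ∏ i ∈ P, (1 - (1 / (i:ℝ))) := by simp [sub_eq_add_neg]
  rw [e3] at h4
  have hrr : (r:ℝ) ≤ 4 ^ r := by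
    have : r < 4 ^ r := Nat.lt_pow_self (by norm_num)
    exact_mod_cast this.le
  have m3 : (1/2:ℝ) ^ (4 * r) * ∏ i ∈ P, (1 + 2 / (i:ℝ)) ≤ 8 / r := by
    calc (1/2:ℝ) ^ (4 * r) * ∏ i ∈ P, (1 + 2 / (i:ℝ)) ≤ (1/2:ℝ) ^ (4 * r) * (8 * 4 ^ r) := by gcongr
      _ = 8 / 4 ^ r := by
        rw [pow_mul]; 
        have : ((1/2:ℝ)^4)^r * (4^r * 4 ^ r) = 1 := by rw [← mul_pow, ← mul_pow]; norm_num
        field_simp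
        nlinarith
      _ ≤ 8 / r := by gcongr
  have m4 : ((P.powerset.filter (fun D => D.card ≤ 4 * r)).card : ℝ) ≤ H / r := by
    have hPc : P.card ≤ 2 ^ r := by
      have : P ⊆ Finset.range (2 ^ r) := fun p hp => Finset.mem_range.mpr (Nat.mem_primesBelow.mp hp).1
      simpa using Finset.card_le_card this
    have k1 : (P.powerset.filter (fun D => D.card ≤ 4 * r)).card ≤ ∑ j ∈ Finset.range (4 * r + 1), (2 ^ (4 * r ^ 2)) := by
      calc (P.powerset.filter (fun D => D.card ≤ 4 * r)).card
          ≤ ((Finset.range (4 * r + 1)).biUnion (fun j => P.powersetCard j)).card := by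
            apply Finset.card_le_card
            intro D hD
            simp only [Finset.mem_filter, Finset.mem_powerset] at hD
            simp only [Finset.mem_biUnion, Finset.mem_range, Finset.mem_powersetCard]
            exact ⟨D.card, by omega, hD.1, rfl⟩
        _ ≤ ∑ j ∈ Finset.range (4 * r + 1), (P.powersetCard j).card := Finset.card_biUnion_le
        _ ≤ _ := by
            apply Finset.sum_le_sum
            intro j hj
            rw [Finset.mem_range] at hj
            rw [Finset.card_powersetCard]
            calc P.card.choose j ≤ P.card ^ j := Nat.choose_le_pow _ _
              _ ≤ (2 ^ r) ^ j := Nat.pow_le_pow_left hPc _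
              _ = 2 ^ (r * j) := (pow_mul _ _ _).symm
              _ ≤ 2 ^ (4 * r ^ 2) := Nat.pow_le_pow_right (by norm_num) (by nlinarith)
    rw [Finset.sum_const, Finset.card_range, smul_eq_mul] at k1
    have k2 : (4 * r + 1) * 2 ^ (4 * r ^ 2) * r ≤ H := by
      have q1 : 4 * r + 1 ≤ 2 ^ (4 * r) := Nat.lt_two_pow_self
      have q2 : r ≤ 2 ^ r := Nat.lt_two_pow_self.le
      calc (4 * r + 1) * 2 ^ (4 * r ^ 2) * r ≤ 2 ^ (4 * r) * 2 ^ (4 * r ^ 2) * 2 ^ r := by gcongr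
        _ = 2 ^ (4 * r + 4 * r ^ 2 + r) := by rw [pow_add, pow_add]
        _ ≤ 2 ^ (9 * r ^ 2) := Nat.pow_le_pow_right (by norm_num) (by nlinarith)
        _ ≤ H := hH
    rw [le_div_iff₀ (by linarith)]
    exact_mod_cast (Nat.mul_le_mul_right r k1).trans k2
  have hH0 : (0:ℝ) ≤ H := by positivity
  have n1 := mul_le_mul_of_nonneg_left m1 hH0
  have n2 := mul_le_mul_of_nonneg_left m3 hH0
  calc _ ≤ _ := h4
    _ ≤ (H:ℝ) * (2 / r) + H * (8 / r) + H / r := by linarith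
    _ = 11 * H / r := by ring

/-- inverse square weight constant -/
noncomputable def C0 : ℝ := ∑' j : ℕ, 4 / (1 + (j:ℝ)) ^ 2

lemma C0_summable : Summable (fun j : ℕ => 4 / (1 + (j:ℝ)) ^ 2) := by
  have h := (summable_nat_add_iff 1).mpr (Real.summable_one_div_nat_pow.mpr (by norm_num : 1 < 2))
  have := h.mul_left 4
  refine this.congr ?_
  intro j; push_cast; ring

lemma C0_nonneg : 0 ≤ C0 := tsum_nonneg (fun j => by positivity)

/-- kernel -/
noncomputable def wker (T x : ℝ) : ℝ := if x = 0 then 1 else min 1 (1 / (T * x) ^ 2)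

/-- window -/
def inWin (T : ℝ) (p : ℕ) (j : ℕ) (q : ℕ) : Prop :=
  (p:ℝ) * Real.exp (j / T) ≤ q ∧ (q:ℝ) < p * Real.exp ((j + 1) / T)

lemma exp_win (T : ℝ) (hT : 1 ≤ T) (p j : ℕ) :
    (p:ℝ) * Real.exp ((j + 1) / T) ≤ p * Real.exp (j / T) + 2 * (p * Real.exp (j / T)) / T := by
  have h1 : Real.exp (1 / T) ≤ 1 + 2 / T := by
    have h0 : 0 ≤ 1 / T := by positivity
    have h2 : 1 / T ≤ 1 := by rw [div_le_one (by linarith)]; exact hT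
    have := Real.abs_exp_sub_one_le (x := 1 / T) (by rw [abs_of_nonneg h0]; exact h2)
    rw [abs_of_nonneg h0] at this
    have := (abs_le.mp this).2
    have e : 2 / T = 2 * (1 / T) := by ring
    rw [e]; linarith
  rw [add_div, Real.exp_add]
  have : (0:ℝ) ≤ p * Real.exp (j / T) := by positivity
  calc (p:ℝ) * (Real.exp (j / T) * Real.exp (1 / T)) = (p * Real.exp (j / T)) * Real.exp (1 / T) := by ring
    _ ≤ (p * Real.exp (j / T)) * (1 + 2 / T) := by gcongr
    _ = _ := by ring

lemma win_mem (T : ℝ) (hT : 1 ≤ T) (p j q : ℕ) (hp : 1 ≤ p) (h : inWin T p j q) :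
    q ∈ Finset.Ioc (⌈(p:ℝ) * Real.exp (j / T)⌉₊ - 1)
      (⌈(p:ℝ) * Real.exp (j / T)⌉₊ - 1 + ⌈2 * (p * Real.exp (j / T)) / T⌉₊) := by
  have hp' : (1:ℝ) ≤ p := by exact_mod_cast hp
  set y := (p:ℝ) * Real.exp (j / T) with hy
  have hy0 : 0 < y := by positivity
  have hc : 1 ≤ ⌈y⌉₊ := Nat.ceil_pos.mpr hy0
  have h1 : ⌈y⌉₊ ≤ q := Nat.ceil_le.mpr h.1
  have h2 : (q:ℝ) < y + 2 * y / T := h.2.trans_le (exp_win T hT p j)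
  have h3 : y ≤ ⌈y⌉₊ := Nat.le_ceil _
  have h4 : 2 * y / T ≤ ⌈2 * y / T⌉₊ := Nat.le_ceil _
  have h5 : (q:ℝ) < ((⌈y⌉₊ + ⌈2 * y / T⌉₊ : ℕ) : ℝ) := by push_cast; linarith
  have h6 : q < ⌈y⌉₊ + ⌈2 * y / T⌉₊ := by exact_mod_cast h5
  rw [Finset.mem_Ioc]; omega

lemma win_sum_le (T : ℝ) (p j : ℕ) (hp : 1 ≤ p) (Q : Finset ℕ) (hQ : ∀ q ∈ Q, inWin T p j q) :
    ∑ q ∈ Q, 1 / (q:ℝ) ≤ Q.card / (p * Real.exp (j / T)) := by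
  have hp' : (1:ℝ) ≤ p := by exact_mod_cast hp
  rw [div_eq_mul_one_div, ← nsmul_eq_mul]
  apply Finset.sum_le_card_nsmul
  intro q hq
  have := (hQ q hq).1
  gcongr

lemma win_triv (T : ℝ) (hT : 1 ≤ T) (p j : ℕ) (hp : 1 ≤ p) (Q : Finset ℕ) (hQ : ∀ q ∈ Q, inWin T p j q) :
    ∑ q ∈ Q, 1 / (q:ℝ) ≤ 2 / T + 1 / p := by
  have hp' : (1:ℝ) ≤ p := by exact_mod_cast hp
  refine (win_sum_le T p j hp Q hQ).trans ?_
  have hsub : Q ⊆ _ := fun q hq => win_mem T hT p j q hp (hQ q hq)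
  have hc := Finset.card_le_card hsub
  rw [Nat.card_Ioc, Nat.add_sub_cancel_left] at hc
  set y := (p:ℝ) * Real.exp (j / T) with hy
  have hpy : (p:ℝ) ≤ y := by
    rw [hy]; exact le_mul_of_one_le_right (by positivity) (Real.one_le_exp (by positivity))
  have hy0 : 0 < y := by positivity
  have h2 : (⌈2 * y / T⌉₊ : ℝ) < 2 * y / T + 1 := Nat.ceil_lt_add_one (by positivity)
  have h3 : (Q.card : ℝ) ≤ ⌈2 * y / T⌉₊ := by exact_mod_cast hc
  calc (Q.card : ℝ) / y ≤ (2 * y / T + 1) / y := by gcongr; linarith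
    _ = 2 / T + 1 / y := by field_simp
    _ ≤ 2 / T + 1 / p := by gcongr

lemma win_sieve (T : ℝ) (hT : 1 ≤ T) (p j r k : ℕ) (hr : 1 ≤ r) (hrk : 18 * r ^ 2 ≤ k) (hpk : 2 ^ k ≤ p)
    (hpT : T ^ 2 ≤ p) (Q : Finset ℕ) (hQ : ∀ q ∈ Q, inWin T p j q) (hQp : ∀ q ∈ Q, q.Prime) :
    ∑ q ∈ Q, 1 / (q:ℝ) ≤ 33 / (T * r) := by
  have hp : 1 ≤ p := le_trans Nat.one_le_two_pow hpk
  have hp' : (1:ℝ) ≤ p := by exact_mod_cast hp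
  have hr' : (1:ℝ) ≤ r := by exact_mod_cast hr
  refine (win_sum_le T p j hp Q hQ).trans ?_
  have hsub : Q ⊆ _ := fun q hq => Finset.mem_filter.mpr ⟨win_mem T hT p j q hp (hQ q hq), hQp q hq⟩
  have hc := Finset.card_le_card hsub
  set y := (p:ℝ) * Real.exp (j / T) with hy
  have hpy : (p:ℝ) ≤ y := by
    rw [hy]; exact le_mul_of_one_le_right (by positivity) (Real.one_le_exp (by positivity))
  have hy0 : 0 < y := by positivity
  have hyT : T ≤ y / T := by rw [le_div_iff₀ (by linarith)]; nlinarith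
  have hsq : (2:ℝ) ^ (9 * r ^ 2) ≤ y / T := by
    have hz : ((2:ℝ) ^ (9 * r ^ 2)) ^ 2 ≤ p := by
      rw [← pow_mul]
      have : (2:ℕ) ^ (9 * r ^ 2 * 2) ≤ p := (Nat.pow_le_pow_right (by norm_num) (by omega)).trans hpk
      exact_mod_cast this
    have hz2 : (2:ℝ) ^ (9 * r ^ 2) ≤ Real.sqrt y := Real.le_sqrt_of_sq_le (hz.trans hpy)
    have hz3 : T ≤ Real.sqrt y := Real.le_sqrt_of_sq_le (hpT.trans hpy)
    refine hz2.trans ?_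
    rw [le_div_iff₀ (by linarith)]
    nlinarith [Real.mul_self_sqrt hy0.le, Real.sqrt_nonneg y]
  have hH : 2 ^ (9 * r ^ 2) ≤ ⌈2 * y / T⌉₊ := by
    have : ((2 ^ (9 * r ^ 2) : ℕ) : ℝ) ≤ ⌈2 * y / T⌉₊ := by
      push_cast
      refine le_trans ?_ (Nat.le_ceil _)
      rw [mul_div_assoc]; linarith
    exact_mod_cast this
  have ha : 2 ^ r ≤ ⌈y⌉₊ - 1 := by
    have h1 : p ≤ ⌈y⌉₊ := by
      have : (p:ℝ) ≤ ⌈y⌉₊ := hpy.trans (Nat.le_ceil _)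
      exact_mod_cast this
    have h2 : 2 ^ (r + 1) ≤ 2 ^ k := Nat.pow_le_pow_right (by norm_num) (by nlinarith)
    have h3 : 2 ≤ 2 ^ (r + 1) := by rw [pow_succ]; have := Nat.one_le_two_pow (n := r); omega
    rw [pow_succ] at h2 h3
    omega
  have hs := sieve _ _ r hr ha hH
  have h2 : (⌈2 * y / T⌉₊ : ℝ) < 2 * y / T + 1 := Nat.ceil_lt_add_one (by positivity)
  have h3 : (Q.card : ℝ) ≤ 11 * ⌈2 * y / T⌉₊ / r := le_trans (by exact_mod_cast hc) hs
  calc (Q.card : ℝ) / y ≤ (11 * ⌈2 * y / T⌉₊ / r) / y := by gcongr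
    _ ≤ (11 * (3 * (y / T)) / r) / y := by
      gcongr
      rw [mul_div_assoc] at h2 ⊢
      linarith
    _ = 33 / (T * r) := by field_simp; norm_num

lemma wker_le (T x : ℝ) (hT : 0 < T) (hx : 0 ≤ x) : wker T x ≤ 4 / (1 + (⌊T * x⌋₊ : ℝ)) ^ 2 := by
  have h0 : 0 ≤ T * x := by positivity
  have hf := Nat.floor_le h0
  set u := T * x
  have : wker T x ≤ 4 / (1 + u) ^ 2 := by
    unfold wker
    by_cases hu : u ≤ 1
    · refine (show _ ≤ (1:ℝ) by split_ifs; exacts [le_rfl, min_le_left _ _]).trans ?_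
      rw [le_div_iff₀ (by positivity)]; nlinarith
    · push Not at hu
      have hx0 : x ≠ 0 := by
        intro h; simp only [u, h, mul_zero] at hu; linarith
      rw [if_neg hx0]
      refine (min_le_right _ _).trans ?_
      rw [div_le_div_iff₀ (by positivity) (by positivity)]; nlinarith
  refine this.trans ?_
  gcongr

lemma wker_nonneg (T x : ℝ) : 0 ≤ wker T x := by
  unfold wker
  split_ifs
  · norm_num
  · exact le_min (by norm_num) (by positivity)

lemma W_le (T : ℝ) (hT : 1 ≤ T) (p : ℕ) (hp : 1 ≤ p) (Q : Finset ℕ) (hQ : ∀ q ∈ Q, p ≤ q) (B : ℝ) (hB0 : 0 ≤ B)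
    (hB : ∀ j : ℕ, ∀ Q' ⊆ Q, (∀ q ∈ Q', inWin T p j q) → ∑ q ∈ Q', 1 / (q:ℝ) ≤ B) :
    ∑ q ∈ Q, 1 / (q:ℝ) * wker T (Real.log q - Real.log p) ≤ C0 * B := by
  have hp' : (1:ℝ) ≤ p := by exact_mod_cast hp
  have hT0 : 0 < T := by linarith
  set g : ℕ → ℕ := fun q => ⌊T * (Real.log q - Real.log p)⌋₊ with hg
  have hpos : ∀ q ∈ Q, 0 ≤ Real.log q - Real.log p := by
    intro q hq
    have : (p:ℝ) ≤ q := by exact_mod_cast hQ q hq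
    have := Real.log_le_log (by linarith) this
    linarith
  rw [← Finset.sum_fiberwise_of_maps_to (s := Q) (t := Q.image g) (g := g) (fun q hq => Finset.mem_image_of_mem _ hq)]
  calc _ ≤ ∑ j ∈ Q.image g, 4 / (1 + (j:ℝ)) ^ 2 * B := by
        apply Finset.sum_le_sum
        intro j _
        calc _ ≤ ∑ q ∈ Q.filter (fun q => g q = j), 4 / (1 + (j:ℝ)) ^ 2 * (1 / (q:ℝ)) := by
              apply Finset.sum_le_sum
              intro q hq
              rw [Finset.mem_filter] at hq
              rw [mul_comm]
              gcongr
              rw [← hq.2]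
              exact wker_le T _ hT0 (hpos q hq.1)
          _ = 4 / (1 + (j:ℝ)) ^ 2 * ∑ q ∈ Q.filter (fun q => g q = j), (1 / (q:ℝ)) := by rw [Finset.mul_sum]
          _ ≤ _ := by
              gcongr
              apply hB j _ (Finset.filter_subset _ _)
              intro q hq
              rw [Finset.mem_filter] at hq
              have hq0 : (0:ℝ) < q := by have : (p:ℝ) ≤ q := by exact_mod_cast hQ q hq.1
                                         linarith
              have h1 := (Nat.floor_eq_iff (mul_nonneg hT0.le (hpos q hq.1))).mp hq.2
              have e : (q:ℝ) = p * Real.exp (Real.log q - Real.log p) := by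
                rw [Real.exp_sub, Real.exp_log hq0, Real.exp_log (by linarith)]; field_simp
              unfold inWin
              rw [e]
              constructor
              · gcongr
                rw [div_le_iff₀ hT0, mul_comm]; exact h1.1
              · gcongr
                rw [lt_div_iff₀ hT0, mul_comm]; exact h1.2
    _ = (∑ j ∈ Q.image g, 4 / (1 + (j:ℝ)) ^ 2) * B := by rw [Finset.sum_mul]
    _ ≤ C0 * B := by
        gcongr
        exact C0_summable.sum_le_tsum _ (fun j _ => by positivity)

lemma wker_even (T x : ℝ) : wker T (-x) = wker T x := by
  unfold wker; simp [mul_pow]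

lemma cheb (k : ℕ) (Q : Finset ℕ) (hQ : ∀ q ∈ Q, q.Prime ∧ 2 ^ k ≤ q ∧ q < 2 ^ (k + 1)) :
    k * Q.card ≤ 4 * 2 ^ k := by
  have h1 : (2 ^ k) ^ Q.card ≤ ∏ q ∈ Q, q := by
    rw [← Finset.prod_const]
    exact Finset.prod_le_prod' (fun q hq => (hQ q hq).2.1)
  have h2 : ∏ q ∈ Q, q ≤ primorial (2 ^ (k + 1)) := by
    unfold primorial
    apply Finset.prod_le_prod_of_subset_of_one_le'
    · intro q hq
      have := hQ q hq
      simp only [Finset.mem_filter, Finset.mem_range]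
      exact ⟨by omega, this.1⟩
    · intro q hq _
      exact (Finset.mem_filter.mp hq).2.one_lt.le
  have h3 := h1.trans (h2.trans (primorial_le_four_pow _))
  rw [← pow_mul, show (4:ℕ) = 2 ^ 2 by norm_num, ← pow_mul] at h3
  have := (Nat.pow_le_pow_iff_right (by norm_num)).mp h3
  rw [pow_succ] at this
  omega

/-- constant -/
noncomputable def C1 : ℝ := ∑' k : ℕ, 4 * (1 / (k:ℝ) ^ (3/2 : ℝ))

lemma C1_sum (Q : Finset ℕ) (hQ : ∀ q ∈ Q, q.Prime) :
    ∑ q ∈ Q, 1 / (q:ℝ) * (1 / Real.sqrt (Nat.log 2 q)) ≤ C1 := by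
  rw [← Finset.sum_fiberwise_of_maps_to (s := Q) (t := Q.image (Nat.log 2)) (g := Nat.log 2) (fun q hq => Finset.mem_image_of_mem _ hq)]
  have hs : Summable (fun k : ℕ => 4 * (1 / (k:ℝ) ^ (3/2 : ℝ))) :=
    (Real.summable_one_div_nat_rpow.mpr (by norm_num)).mul_left 4
  refine le_trans ?_ (hs.sum_le_tsum (Q.image (Nat.log 2)) (fun k _ => by positivity))
  apply Finset.sum_le_sum
  intro k hk
  have hk1 : 1 ≤ k := by
    obtain ⟨q, hq, rfl⟩ := Finset.mem_image.mp hk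
    exact Nat.log_pos (by norm_num) (hQ q hq).two_le
  have hk' : (1:ℝ) ≤ k := by exact_mod_cast hk1
  set R := Q.filter (fun q => Nat.log 2 q = k) with hR
  have hRp : ∀ q ∈ R, q.Prime ∧ 2 ^ k ≤ q ∧ q < 2 ^ (k + 1) := by
    intro q hq
    obtain ⟨h1, h2⟩ := Finset.mem_filter.mp hq
    have := hQ q h1
    refine ⟨this, ?_, ?_⟩
    · rw [← h2]; exact Nat.pow_log_le_self 2 this.ne_zero
    · rw [← h2]; exact Nat.lt_pow_succ_log_self (by norm_num) q
  have hc := cheb k R hRp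
  have hc' : (k:ℝ) * R.card ≤ 4 * 2 ^ k := by exact_mod_cast hc
  calc ∑ q ∈ R, 1 / (q:ℝ) * (1 / Real.sqrt (Nat.log 2 q)) ≤ R.card • (1 / 2 ^ k * (1 / Real.sqrt k) : ℝ) := by
        apply Finset.sum_le_card_nsmul
        intro q hq
        have h2 : ((2:ℝ) ^ k) ≤ q := by exact_mod_cast (hRp q hq).2.1
        rw [(Finset.mem_filter.mp hq).2]
        gcongr
    _ ≤ 4 * (1 / (k:ℝ) ^ (3/2 : ℝ)) := by
        have e : (k:ℝ) ^ (3/2 : ℝ) = k * Real.sqrt k := by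
          rw [show (3/2:ℝ) = 1 + 1/2 by norm_num, Real.rpow_add (by linarith), Real.rpow_one, Real.sqrt_eq_rpow]
        rw [e, nsmul_eq_mul]
        have hsq : 0 < Real.sqrt k := Real.sqrt_pos.mpr (by linarith)
        rw [← sub_nonneg]
        have : 4 * (1 / (k * Real.sqrt k)) - R.card * (1 / 2 ^ k * (1 / Real.sqrt k))
          = (4 * 2 ^ k - k * R.card) / (k * 2 ^ k * Real.sqrt k) := by field_simp
        rw [this]
        apply div_nonneg (by linarith) (by positivity)

lemma r_choice (k : ℕ) (hk : 25 ≤ k) : ∃ r : ℕ, 1 ≤ r ∧ 18 * r ^ 2 ≤ k ∧ Real.sqrt k / 10 ≤ r := by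
  have h5 : 5 ≤ Nat.sqrt k := Nat.le_sqrt.mpr (by omega)
  have hsq := Nat.sqrt_le' k
  set s := Nat.sqrt k with hs
  refine ⟨s / 5, by omega, ?_, ?_⟩
  · have : 5 * (s / 5) ≤ s := Nat.mul_div_le s 5
    have h2 := Nat.pow_le_pow_left this 2
    rw [mul_pow] at h2
    nlinarith [Nat.zero_le ((s / 5) ^ 2)]
  · have h1 : Real.sqrt k < s + 1 := Real.real_sqrt_lt_nat_sqrt_succ
    have h2 : s + 1 ≤ 10 * (s / 5) := by omega
    have h3 : (s:ℝ) + 1 ≤ 10 * ((s / 5 : ℕ) : ℝ) := by exact_mod_cast h2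
    linarith

lemma W_bound (T : ℝ) (hT : 2 ^ 13 ≤ T) (p : ℕ) (hp : p.Prime) (Q : Finset ℕ) (hQp : ∀ q ∈ Q, q.Prime)
    (hQ : ∀ q ∈ Q, p ≤ q) :
    T * ∑ q ∈ Q, 1 / (q:ℝ) * wker T (Real.log q - Real.log p) ≤
      C0 * ((if (p:ℝ) ≤ T ^ 2 then 2 else 0) + T / p + 330 * (1 / Real.sqrt (Nat.log 2 p))) := by
  have hT1 : 1 ≤ T := by linarith
  have hT0 : 0 < T := by linarith
  have hp0 : (0:ℝ) < p := by exact_mod_cast hp.pos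
  by_cases h : (p:ℝ) ≤ T ^ 2
  · rw [if_pos h]
    have := W_le T hT1 p hp.one_lt.le Q hQ (2 / T + 1 / p) (by positivity)
      (fun j Q' _ hQ' => win_triv T hT1 p j hp.one_lt.le Q' hQ')
    calc _ ≤ T * (C0 * (2 / T + 1 / p)) := by gcongr
      _ = C0 * (2 + T / p) := by field_simp
      _ ≤ _ := by
        apply mul_le_mul_of_nonneg_left _ C0_nonneg
        have : (0:ℝ) ≤ 330 * (1 / Real.sqrt (Nat.log 2 p)) := by positivity
        linarith
  · rw [if_neg h]
    push Not at h
    have hk : 25 ≤ Nat.log 2 p := by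
      apply Nat.le_log_of_pow_le (by norm_num)
      have : ((2 ^ 25 : ℕ) : ℝ) ≤ p := by push_cast; nlinarith
      exact_mod_cast this
    obtain ⟨r, hr1, hr2, hr3⟩ := r_choice _ hk
    have hr' : (1:ℝ) ≤ r := by exact_mod_cast hr1
    have := W_le T hT1 p hp.one_lt.le Q hQ (33 / (T * r)) (by positivity)
      (fun j Q' hs hQ' => win_sieve T hT1 p j r _ hr1 hr2 (Nat.pow_log_le_self 2 hp.ne_zero) h.le Q' hQ' (fun q hq => hQp q (hs hq)))
    have hsq : 0 < Real.sqrt (Nat.log 2 p) := Real.sqrt_pos.mpr (by exact_mod_cast (by omega : 0 < Nat.log 2 p))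
    calc _ ≤ T * (C0 * (33 / (T * r))) := by gcongr
      _ = C0 * (33 / r) := by field_simp
      _ ≤ C0 * (33 / (Real.sqrt (Nat.log 2 p) / 10)) := by
        apply mul_le_mul_of_nonneg_left _ C0_nonneg
        gcongr
      _ = C0 * (330 * (1 / Real.sqrt (Nat.log 2 p))) := by field_simp; ring
      _ ≤ _ := by
        apply mul_le_mul_of_nonneg_left _ C0_nonneg
        have : (0:ℝ) ≤ T / p := by positivity
        linarith

lemma dbl (T : ℝ) (hT : 2 ^ 13 ≤ T) (M : ℕ) (hM : 1 ≤ M) (Q : Finset ℕ) (hQp : ∀ q ∈ Q, q.Prime)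
    (hQ : ∀ q ∈ Q, M < q) :
    T * ∑ p ∈ Q, ∑ q ∈ Q, 1 / (p:ℝ) * (1 / (q:ℝ)) * wker T (Real.log q - Real.log p) ≤
      2 * (C0 * (2 * (1 + 2 * Real.log T) + T / M + 330 * C1)) := by
  have hT1 : 1 ≤ T := by linarith
  have hT0 : 0 < T := by linarith
  set f : ℕ → ℕ → ℝ := fun p q => 1 / (p:ℝ) * (1 / (q:ℝ)) * wker T (Real.log q - Real.log p) with hf
  have hfn : ∀ p q, 0 ≤ f p q := fun p q => by
    have := wker_nonneg T (Real.log q - Real.log p)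
    simp only [hf]; positivity
  have hfs : ∀ p q, f p q = f q p := fun p q => by
    simp only [hf]; rw [← wker_even T (Real.log q - Real.log p), neg_sub]; ring
  have h1 : ∑ p ∈ Q, ∑ q ∈ Q, f p q ≤ 2 * ∑ p ∈ Q, ∑ q ∈ Q.filter (fun q => p ≤ q), f p q := by
    have a1 : ∑ p ∈ Q, ∑ q ∈ Q, f p q ≤ ∑ p ∈ Q, ∑ q ∈ Q, ((if p ≤ q then f p q else 0) + (if q ≤ p then f q p else 0)) := by
      apply Finset.sum_le_sum; intro p _; apply Finset.sum_le_sum; intro q _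
      have := hfn p q
      have := hfs p q
      rcases le_total p q with h | h
      · rw [if_pos h]; split_ifs <;> linarith
      · rw [if_pos h]; split_ifs <;> linarith
    refine a1.trans (le_of_eq ?_)
    simp_rw [Finset.sum_add_distrib]
    rw [Finset.sum_comm (f := fun p q => if q ≤ p then f q p else 0), two_mul]
    simp_rw [Finset.sum_filter]
  have h2 : T * ∑ p ∈ Q, ∑ q ∈ Q.filter (fun q => p ≤ q), f p q ≤
      ∑ p ∈ Q, 1 / (p:ℝ) * (C0 * ((if (p:ℝ) ≤ T ^ 2 then 2 else 0) + T / p + 330 * (1 / Real.sqrt (Nat.log 2 p)))) := by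
    rw [Finset.mul_sum]
    apply Finset.sum_le_sum
    intro p hp
    have := W_bound T hT p (hQp p hp) (Q.filter (fun q => p ≤ q)) (fun q hq => hQp q (Finset.mem_filter.mp hq).1)
      (fun q hq => (Finset.mem_filter.mp hq).2)
    have e : T * ∑ q ∈ Q.filter (fun q => p ≤ q), f p q = 1 / (p:ℝ) * (T * ∑ q ∈ Q.filter (fun q => p ≤ q), 1 / (q:ℝ) * wker T (Real.log q - Real.log p)) := by
      simp only [hf, Finset.mul_sum]
      apply Finset.sum_congr rfl; intros; ring
    rw [e]
    gcongr
  have h3 : ∑ p ∈ Q, 1 / (p:ℝ) * (C0 * ((if (p:ℝ) ≤ T ^ 2 then 2 else 0) + T / p + 330 * (1 / Real.sqrt (Nat.log 2 p))))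
     = C0 * (2 * ∑ p ∈ Q.filter (fun p : ℕ => (p:ℝ) ≤ T ^ 2), 1 / (p:ℝ) + T * ∑ p ∈ Q, ((p:ℝ) ^ 2)⁻¹ + 330 * ∑ p ∈ Q, 1 / (p:ℝ) * (1 / Real.sqrt (Nat.log 2 p))) := by
    rw [Finset.sum_filter, Finset.mul_sum, Finset.mul_sum, Finset.mul_sum, ← Finset.sum_add_distrib, ← Finset.sum_add_distrib, Finset.mul_sum]
    apply Finset.sum_congr rfl
    intro p hp
    split_ifs <;> ring
  have h4 : ∑ p ∈ Q.filter (fun p : ℕ => (p:ℝ) ≤ T ^ 2), 1 / (p:ℝ) ≤ 1 + 2 * Real.log T := by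
    have := harmonic_floor_le_one_add_log (T ^ 2) (by nlinarith)
    rw [harmonic_eq_sum_Icc, Real.log_pow] at this
    push_cast at this
    refine le_trans ?_ this
    simp only [one_div]
    apply Finset.sum_le_sum_of_subset_of_nonneg
    · intro p hp
      obtain ⟨ha, hb⟩ := Finset.mem_filter.mp hp
      rw [Finset.mem_Icc]; exact ⟨(hQp p ha).one_lt.le, Nat.le_floor hb⟩
    · intros; positivity
  have h5 : ∑ p ∈ Q, ((p:ℝ) ^ 2)⁻¹ ≤ 1 / M := by
    have hsub : Q ⊆ Finset.Ioc M (M + Q.sup id) := by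
      intro q hq
      have := Finset.le_sup (f := id) hq
      simp only [id] at this
      rw [Finset.mem_Ioc]; exact ⟨hQ q hq, by omega⟩
    refine (Finset.sum_le_sum_of_subset_of_nonneg hsub (fun _ _ _ => by positivity)).trans ?_
    refine (sum_Ioc_inv_sq_le_sub (by omega) (by omega)).trans ?_
    rw [one_div]
    have : (0:ℝ) ≤ ((M + Q.sup id : ℕ) : ℝ)⁻¹ := by positivity
    linarith
  have h6 := C1_sum Q hQp
  calc _ ≤ T * (2 * ∑ p ∈ Q, ∑ q ∈ Q.filter (fun q => p ≤ q), f p q) := by gcongr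
    _ = 2 * (T * ∑ p ∈ Q, ∑ q ∈ Q.filter (fun q => p ≤ q), f p q) := by ring
    _ ≤ 2 * (C0 * (2 * (1 + 2 * Real.log T) + T * (1 / M) + 330 * C1)) := by
        rw [h3] at h2
        have : C0 * (2 * ∑ p ∈ Q.filter (fun p : ℕ => (p:ℝ) ≤ T ^ 2), 1 / (p:ℝ) + T * ∑ p ∈ Q, ((p:ℝ) ^ 2)⁻¹ + 330 * ∑ p ∈ Q, 1 / (p:ℝ) * (1 / Real.sqrt (Nat.log 2 p))) ≤ C0 * (2 * (1 + 2 * Real.log T) + T * (1 / M) + 330 * C1) := by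
          apply mul_le_mul_of_nonneg_left _ C0_nonneg
          gcongr
        linarith
    _ = _ := by ring

lemma wker_mono (T x y : ℝ) (hT : 0 < T) (h : |y| ≤ |x|) : wker T x ≤ wker T y := by
  unfold wker
  by_cases hy : y = 0
  · rw [if_pos hy]; split_ifs; exacts [le_rfl, min_le_left _ _]
  · have hx : x ≠ 0 := by
      intro hx; rw [hx, abs_zero] at h
      exact hy (abs_eq_zero.mp (le_antisymm h (abs_nonneg _)))
    rw [if_neg hy, if_neg hx]
    have hxy : y ^ 2 ≤ x ^ 2 := sq_le_sq.mpr h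
    have : 0 < y ^ 2 := by positivity
    rw [mul_pow, mul_pow]
    gcongr

lemma wker_int (T x : ℝ) (hT : 0 < T) :
    ∫ s in (0:ℝ)..(2 * T), (1 - s / (2 * T)) * Real.cos (s * x) ≤ T * wker T x := by
  have htriv : ∫ s in (0:ℝ)..(2 * T), (1 - s / (2 * T)) * Real.cos (s * x) ≤ T := by
    have h1 : ∫ s in (0:ℝ)..(2 * T), (1 - s / (2 * T)) * Real.cos (s * x) ≤ ∫ s in (0:ℝ)..(2 * T), (1 - s / (2 * T)) := by
      apply intervalIntegral.integral_mono_on (by linarith)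
      · exact (by fun_prop : Continuous _).intervalIntegrable _ _
      · exact (by fun_prop : Continuous _).intervalIntegrable _ _
      · intro s hs
        have : s / (2 * T) ≤ 1 := by rw [div_le_one (by linarith)]; exact hs.2
        exact mul_le_of_le_one_right (by linarith) (Real.cos_le_one _)
    refine h1.trans (le_of_eq ?_)
    rw [intervalIntegral.integral_sub (by simp) ((by fun_prop : Continuous _).intervalIntegrable _ _)]
    rw [intervalIntegral.integral_div, integral_id]
    simp; field_simp; ring
  unfold wker
  by_cases hx : x = 0
  · rw [if_pos hx]; linarith
  · rw [if_neg hx, mul_min_of_nonneg _ _ hT.le, mul_one]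
    refine le_min htriv ?_
    have hd : ∀ s ∈ Set.uIcc 0 (2 * T), HasDerivAt (fun s => (1 - s / (2 * T)) * (Real.sin (s * x) / x) - Real.cos (s * x) / (2 * T * x ^ 2))
        ((1 - s / (2 * T)) * Real.cos (s * x)) s := by
      intro s _
      have a1 : HasDerivAt (fun s : ℝ => s * x) x s := by simpa using (hasDerivAt_id s).mul_const x
      have a2 : HasDerivAt (fun s : ℝ => 1 - s / (2 * T)) (-(1 / (2 * T))) s := by
        simpa using ((hasDerivAt_id s).div_const (2 * T)).const_sub 1
      have := (a2.mul (a1.sin.div_const x)).sub (a1.cos.div_const (2 * T * x ^ 2))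
      refine this.congr_deriv ?_
      field_simp
      ring
    rw [intervalIntegral.integral_eq_sub_of_hasDerivAt hd ((by fun_prop : Continuous _).intervalIntegrable _ _)]
    have e : (2 * T) / (2 * T) = 1 := div_self (by positivity)
    simp only [e, sub_self, zero_mul, zero_div, Real.sin_zero, Real.cos_zero, mul_zero, zero_sub]
    have hc := Real.neg_one_le_cos (2 * T * x)
    have hx2 : 0 < x ^ 2 := by positivity
    have e2 : -(Real.cos (2 * T * x) / (2 * T * x ^ 2)) - -(1 / (2 * T * x ^ 2)) = (1 - Real.cos (2 * T * x)) / (2 * T * x ^ 2) := by ring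
    have e3 : T * (1 / (T * x) ^ 2) = 2 / (2 * T * x ^ 2) := by field_simp
    rw [e2, e3]
    gcongr
    linarith

lemma int_bound (T : ℝ) (hT : 0 < T) (Q : Finset ℕ) (hQ : ∀ q ∈ Q, 1 ≤ q) :
    ∫ s in (0:ℝ)..T, (∑ p ∈ Q, Real.cos (s * Real.log p) / p) ^ 2 ≤
      2 * (T * ∑ p ∈ Q, ∑ q ∈ Q, 1 / (p:ℝ) * (1 / (q:ℝ)) * wker T (Real.log q - Real.log p)) := by
  set S : ℝ → ℝ := fun s => ∑ p ∈ Q, Real.cos (s * Real.log p) / p with hS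
  have hSc : Continuous S := by fun_prop
  have hw : Continuous (fun s => 2 * (1 - s / (2 * T)) * S s ^ 2) := by fun_prop
  have h1 : ∫ s in (0:ℝ)..T, S s ^ 2 ≤ ∫ s in (0:ℝ)..(2 * T), 2 * (1 - s / (2 * T)) * S s ^ 2 := by
    rw [← intervalIntegral.integral_add_adjacent_intervals (hw.intervalIntegrable 0 T) (hw.intervalIntegrable T (2 * T))]
    have a1 : ∫ s in (0:ℝ)..T, S s ^ 2 ≤ ∫ s in (0:ℝ)..T, 2 * (1 - s / (2 * T)) * S s ^ 2 := by
      apply intervalIntegral.integral_mono_on hT.le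
      · exact (by fun_prop : Continuous (fun s => S s ^ 2)).intervalIntegrable _ _
      · exact hw.intervalIntegrable _ _
      · intro s hs
        have : s / (2 * T) ≤ 1 / 2 := by rw [div_le_iff₀ (by linarith)]; linarith [hs.2]
        exact le_mul_of_one_le_left (by positivity) (by linarith)
    have a2 : 0 ≤ ∫ s in T..(2 * T), 2 * (1 - s / (2 * T)) * S s ^ 2 := by
      apply intervalIntegral.integral_nonneg (by linarith)
      intro s hs
      have : s / (2 * T) ≤ 1 := by rw [div_le_one (by linarith)]; exact hs.2
      have : 0 ≤ 1 - s / (2 * T) := by linarith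
      positivity
    linarith
  refine h1.trans ?_
  have h2 : ∀ s, 2 * (1 - s / (2 * T)) * S s ^ 2 = ∑ p ∈ Q, ∑ q ∈ Q,
      (1 / (p:ℝ) * (1 / (q:ℝ))) * ((1 - s / (2 * T)) * Real.cos (s * (Real.log q - Real.log p))
        + (1 - s / (2 * T)) * Real.cos (s * (Real.log q + Real.log p))) := by
    intro s
    rw [sq, hS]
    simp only []
    rw [Finset.sum_mul_sum]
    simp only [Finset.mul_sum]
    apply Finset.sum_congr rfl; intro p _
    apply Finset.sum_congr rfl; intro q _
    rw [mul_sub s, mul_add s, Real.cos_sub, Real.cos_add]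
    ring
  simp_rw [h2]
  have hcc : ∀ p q : ℕ, Continuous (fun s => (1 / (p:ℝ) * (1 / (q:ℝ))) * ((1 - s / (2 * T)) * Real.cos (s * (Real.log q - Real.log p))
        + (1 - s / (2 * T)) * Real.cos (s * (Real.log q + Real.log p)))) := by intro p q; fun_prop
  rw [intervalIntegral.integral_finsetSum]
  swap
  · intro p _
    exact (continuous_finsetSum _ (fun q _ => hcc p q)).intervalIntegrable _ _
  rw [Finset.mul_sum, Finset.mul_sum]
  apply Finset.sum_le_sum
  intro p hp
  rw [intervalIntegral.integral_finsetSum]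
  swap
  · intro q _
    exact (hcc p q).intervalIntegrable _ _
  rw [Finset.mul_sum, Finset.mul_sum]
  apply Finset.sum_le_sum
  intro q hq
  rw [intervalIntegral.integral_const_mul, intervalIntegral.integral_add
    ((by fun_prop : Continuous _).intervalIntegrable _ _) ((by fun_prop : Continuous _).intervalIntegrable _ _)]
  have b1 := wker_int T (Real.log q - Real.log p) hT
  have b2 := wker_int T (Real.log q + Real.log p) hT
  have lp : 0 ≤ Real.log p := Real.log_nonneg (by exact_mod_cast hQ p hp)
  have lq : 0 ≤ Real.log q := Real.log_nonneg (by exact_mod_cast hQ q hq)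
  have b3 := wker_mono T (Real.log q + Real.log p) (Real.log q - Real.log p) hT (by
    rw [abs_of_nonneg (add_nonneg lq lp), abs_le]; constructor <;> linarith)
  have b4 := mul_le_mul_of_nonneg_left b3 hT.le
  calc _ ≤ 1 / (p:ℝ) * (1 / (q:ℝ)) * (2 * (T * wker T (Real.log q - Real.log p))) := by
        gcongr; linarith
    _ = _ := by ring

lemma fatou_sq (T K : ℝ) (hT : 0 ≤ T) (hK : 0 ≤ K) (g : ℕ → ℝ → ℝ) (f : ℝ → ℝ) (hg : ∀ n, Continuous (g n))
    (hlim : ∀ s, s ≠ 0 → Tendsto (fun n => g n s) atTop (nhds (f s)))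
    (hb : ∀ᶠ n in atTop, ∫ s in (0:ℝ)..T, g n s ^ 2 ≤ K) :
    AEStronglyMeasurable f (volume.restrict (Set.Ioc 0 T)) ∧
    IntervalIntegrable (fun s => f s ^ 2) volume 0 T ∧ ∫ s in (0:ℝ)..T, f s ^ 2 ≤ K := by
  set μ := (volume : Measure ℝ).restrict (Set.Ioc 0 T) with hμ
  have hae : ∀ᵐ s ∂μ, Tendsto (fun n => g n s) atTop (nhds (f s)) := by
    filter_upwards [ae_restrict_mem measurableSet_Ioc] with s hs
    exact hlim s hs.1.ne'
  have hm : AEStronglyMeasurable f μ :=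
    aestronglyMeasurable_of_tendsto_ae atTop (fun n => (hg n).aestronglyMeasurable) hae
  have hint : ∀ n, Integrable (fun s => g n s ^ 2) μ := fun n =>
    ((intervalIntegrable_iff_integrableOn_Ioc_of_le hT).mp
      ((by have := hg n; fun_prop : Continuous (fun s => g n s ^ 2)).intervalIntegrable _ _))
  have hF : ∫⁻ s, ENNReal.ofReal (f s ^ 2) ∂μ ≤ ENNReal.ofReal K := by
    calc ∫⁻ s, ENNReal.ofReal (f s ^ 2) ∂μ = ∫⁻ s, liminf (fun n => ENNReal.ofReal (g n s ^ 2)) atTop ∂μ := by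
          apply lintegral_congr_ae
          filter_upwards [hae] with s hs
          exact ((ENNReal.tendsto_ofReal (hs.pow 2)).liminf_eq).symm
      _ ≤ liminf (fun n => ∫⁻ s, ENNReal.ofReal (g n s ^ 2) ∂μ) atTop :=
          lintegral_liminf_le (fun n => by have := hg n; exact (ENNReal.continuous_ofReal.comp (this.pow 2)).measurable)
      _ ≤ ENNReal.ofReal K := by
          apply liminf_le_of_frequently_le'
          apply Eventually.frequently
          filter_upwards [hb] with n hn
          rw [← ofReal_integral_eq_lintegral_ofReal (hint n) (ae_of_all _ (fun s => by positivity))]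
          rw [intervalIntegral.integral_of_le hT] at hn
          exact ENNReal.ofReal_le_ofReal hn
  have hI : Integrable (fun s => f s ^ 2) μ := by
    refine ⟨hm.pow 2, ?_⟩
    rw [hasFiniteIntegral_iff_ofReal (ae_of_all _ (fun s => by positivity))]
    exact hF.trans_lt ENNReal.ofReal_lt_top
  refine ⟨hm, (intervalIntegrable_iff_integrableOn_Ioc_of_le hT).mpr hI, ?_⟩
  rw [intervalIntegral.integral_of_le hT]
  rw [← ofReal_integral_eq_lintegral_ofReal hI (ae_of_all _ (fun s => by positivity))] at hF
  exact (ENNReal.ofReal_le_ofReal_iff hK).mp hF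

lemma mean_cos (x : ℝ) (hx : x ≠ 0) :
    Tendsto (fun T : ℝ => (1 / T) * ∫ s in (0:ℝ)..T, Real.cos (s * x)) atTop (nhds 0) := by
  have e : ∀ T : ℝ, (1 / T) * ∫ s in (0:ℝ)..T, Real.cos (s * x) = (1 / T) * (Real.sin (T * x) / x) := by
    intro T
    rw [intervalIntegral.integral_comp_mul_right (fun u => Real.cos u) hx, integral_cos]
    simp; left; field_simp
  simp_rw [e]
  have h0 : Tendsto (fun T : ℝ => 1 / T) atTop (nhds 0) := by simpa using tendsto_inv_atTop_zero (𝕜 := ℝ)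
  apply h0.zero_mul_isBoundedUnder_le
  refine ⟨1 / |x|, ?_⟩
  simp only [eventually_map]
  filter_upwards with T
  simp only [Function.comp, Real.norm_eq_abs, abs_div]
  gcongr
  exact Real.abs_sin_le_one _

lemma mean_finite (Q : Finset ℕ) (hQ : ∀ q ∈ Q, 2 ≤ q) :
    Tendsto (fun T : ℝ => (1 / T) * ∫ s in (0:ℝ)..T, (∑ p ∈ Q, Real.cos (s * Real.log p) / p) ^ 2) atTop
      (nhds ((1/2) * ∑ p ∈ Q, 1 / (p:ℝ) ^ 2)) := by
  have h2 : ∀ s, (∑ p ∈ Q, Real.cos (s * Real.log p) / p) ^ 2 = ∑ p ∈ Q, ∑ q ∈ Q,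
      (1 / 2 * (1 / (p:ℝ) * (1 / (q:ℝ)))) * (Real.cos (s * (Real.log q - Real.log p))
        + Real.cos (s * (Real.log q + Real.log p))) := by
    intro s
    rw [sq]
    simp only [Finset.sum_mul_sum]
    apply Finset.sum_congr rfl; intro p _
    apply Finset.sum_congr rfl; intro q _
    rw [mul_sub s, mul_add s, Real.cos_sub, Real.cos_add]
    ring
  have hcc : ∀ p q : ℕ, Continuous (fun s => (1 / 2 * (1 / (p:ℝ) * (1 / (q:ℝ)))) * (Real.cos (s * (Real.log q - Real.log p))
        + Real.cos (s * (Real.log q + Real.log p)))) := by intro p q; fun_prop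
  have h3 : ∀ T : ℝ, (1 / T) * ∫ s in (0:ℝ)..T, (∑ p ∈ Q, Real.cos (s * Real.log p) / p) ^ 2 =
      ∑ p ∈ Q, ∑ q ∈ Q, (1 / 2 * (1 / (p:ℝ) * (1 / (q:ℝ)))) * ((1 / T) * (∫ s in (0:ℝ)..T, Real.cos (s * (Real.log q - Real.log p)))
        + (1 / T) * ∫ s in (0:ℝ)..T, Real.cos (s * (Real.log q + Real.log p))) := by
    intro T
    simp_rw [h2]
    rw [intervalIntegral.integral_finsetSum, Finset.mul_sum]
    swap
    · intro p _
      exact (continuous_finsetSum _ (fun q _ => hcc p q)).intervalIntegrable _ _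
    apply Finset.sum_congr rfl; intro p _
    rw [intervalIntegral.integral_finsetSum, Finset.mul_sum]
    swap
    · intro q _
      exact (hcc p q).intervalIntegrable _ _
    apply Finset.sum_congr rfl; intro q _
    rw [intervalIntegral.integral_const_mul, intervalIntegral.integral_add
      ((by fun_prop : Continuous _).intervalIntegrable _ _) ((by fun_prop : Continuous _).intervalIntegrable _ _)]
    ring
  simp_rw [h3]
  have h4 : (1/2) * ∑ p ∈ Q, 1 / (p:ℝ) ^ 2 = ∑ p ∈ Q, ∑ q ∈ Q, (1 / 2 * (1 / (p:ℝ) * (1 / (q:ℝ)))) * ((if q = p then 1 else 0) + 0) := by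
    rw [Finset.mul_sum]
    apply Finset.sum_congr rfl; intro p hp
    simp only [add_zero, mul_ite, mul_one, mul_zero, Finset.sum_ite_eq', if_pos hp]
    ring
  rw [h4]
  have lpos : ∀ q ∈ Q, 0 < Real.log q := fun q hq => Real.log_pos (by exact_mod_cast hQ q hq)
  apply tendsto_finsetSum; intro p hp
  apply tendsto_finsetSum; intro q hq
  apply Tendsto.const_mul
  apply Tendsto.add
  · by_cases h : q = p
    · rw [if_pos h, h]
      apply tendsto_const_nhds.congr'
      filter_upwards [eventually_gt_atTop 0] with T hT
      simp; field_simp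
    · rw [if_neg h]
      apply mean_cos
      rw [sub_ne_zero]
      intro hl
      have hp0 : (0:ℝ) < p := by exact_mod_cast (by have := hQ p hp; omega : 0 < p)
      have hq0 : (0:ℝ) < q := by exact_mod_cast (by have := hQ q hq; omega : 0 < q)
      have := Real.log_injOn_pos (Set.mem_Ioi.mpr hq0) (Set.mem_Ioi.mpr hp0) hl
      exact h (by exact_mod_cast this)
  · apply mean_cos
    have := lpos p hp; have := lpos q hq
    linarith

lemma mem_pUT (t : ℝ) (p : ℕ) : p ∈ primesUpTo t ↔ p.Prime ∧ (p:ℝ) ≤ t := by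
  unfold primesUpTo
  simp only [Finset.mem_filter, Finset.mem_range, Nat.lt_succ_iff]
  constructor
  · rintro ⟨h, h'⟩; exact ⟨h', (Nat.le_floor_iff' h'.ne_zero).mp h⟩
  · rintro ⟨h', h⟩; exact ⟨(Nat.le_floor_iff' h'.ne_zero).mpr h, h'⟩

lemma pUT_mono {s t : ℝ} (h : s ≤ t) : primesUpTo s ⊆ primesUpTo t := by
  intro p hp
  rw [mem_pUT] at hp ⊢
  exact ⟨hp.1, hp.2.trans h⟩

lemma summ2 : Summable (fun p : Nat.Primes => 1 / ((p : ℕ) : ℝ) ^ 2) :=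
  (Real.summable_one_div_nat_pow.mpr (by norm_num : 1 < 2)).subtype _

lemma sum_sub (t : ℝ) : ∑ p ∈ (primesUpTo t).subtype Nat.Prime, 1 / ((p : ℕ) : ℝ) ^ 2 = ∑ p ∈ primesUpTo t, 1 / (p : ℝ) ^ 2 :=
  Finset.sum_subtype_of_mem (fun p : ℕ => 1 / (p : ℝ) ^ 2) (fun p hp => ((mem_pUT t p).mp hp).1)

lemma tail_eq (t : ℝ) : tailSum t =
      ((∑' p : Nat.Primes, 1 / ((p : ℕ) : ℝ) ^ 2) - ∑ p ∈ primesUpTo t, 1 / (p : ℝ) ^ 2) / 2 := by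
  have h1 : ∑' p : Nat.Primes, (if ((p : ℕ) : ℝ) ≤ t then 1 / ((p : ℕ) : ℝ) ^ 2 else 0) = ∑ p ∈ primesUpTo t, 1 / (p : ℝ) ^ 2 := by
    have hS : ∃ S : Finset Nat.Primes, (∀ p : Nat.Primes, p ∈ S ↔ ((p:ℕ):ℝ) ≤ t) ∧
        ∑ p ∈ S, 1 / ((p : ℕ) : ℝ) ^ 2 = ∑ p ∈ primesUpTo t, 1 / (p : ℝ) ^ 2 := by
      refine ⟨(primesUpTo t).subtype Nat.Prime, fun p => ?_, sum_sub t⟩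
      refine Finset.mem_subtype.trans ?_
      refine (mem_pUT t _).trans ?_
      exact ⟨fun h => h.2, fun h => ⟨p.2, h⟩⟩
    obtain ⟨S, hS1, hS2⟩ := hS
    rw [← hS2, tsum_eq_sum (s := S)]
    · apply Finset.sum_congr rfl
      intro p hp
      rw [if_pos ((hS1 p).mp hp)]
    · intro p hp
      rw [if_neg (fun h => hp ((hS1 p).mpr h))]
  have s1 : Summable (fun p : Nat.Primes => if ((p : ℕ) : ℝ) ≤ t then 1 / ((p : ℕ) : ℝ) ^ 2 else 0) := by
    refine Summable.of_nonneg_of_le (fun p => ?_) (fun p => ?_) summ2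
    · split_ifs <;> positivity
    · split_ifs
      · exact le_rfl
      · positivity
  have s2 : Summable (fun p : Nat.Primes => if t < ((p : ℕ) : ℝ) then 1 / ((p : ℕ) : ℝ) ^ 2 else 0) := by
    refine Summable.of_nonneg_of_le (fun p => ?_) (fun p => ?_) summ2
    · split_ifs <;> positivity
    · split_ifs
      · exact le_rfl
      · positivity
  have h2 : ∑' p : Nat.Primes, 1 / ((p : ℕ) : ℝ) ^ 2 = (∑' p : Nat.Primes, if t < ((p : ℕ) : ℝ) then 1 / ((p : ℕ) : ℝ) ^ 2 else 0)
     + ∑' p : Nat.Primes, (if ((p : ℕ) : ℝ) ≤ t then 1 / ((p : ℕ) : ℝ) ^ 2 else 0) := by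
    rw [← s2.tsum_add s1]
    apply tsum_congr
    intro p
    by_cases h : t < ((p : ℕ) : ℝ)
    · rw [if_pos h, if_neg (not_le.mpr h), add_zero]
    · rw [if_neg h, if_pos (not_lt.mp h), zero_add]
  unfold tailSum
  rw [h2, h1]; ring

lemma tail_nonneg (t : ℝ) : 0 ≤ tailSum t := by
  unfold tailSum
  apply mul_nonneg (by norm_num)
  apply tsum_nonneg
  intro p; split_ifs <;> positivity

lemma tail_lim : Tendsto tailSum atTop (nhds 0) := by
  have h : Tendsto (fun t : ℝ => ∑ p ∈ primesUpTo t, 1 / (p : ℝ) ^ 2) atTop (nhds (∑' p : Nat.Primes, 1 / ((p : ℕ) : ℝ) ^ 2)) := by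
    simp_rw [← sum_sub]
    apply summ2.hasSum.comp
    apply tendsto_atTop_finset_of_monotone
    · intro s t hst p hp
      rw [Finset.mem_subtype] at hp ⊢
      exact pUT_mono hst hp
    · intro p
      exact ⟨((p:ℕ):ℝ), by rw [Finset.mem_subtype, mem_pUT]; exact ⟨p.2, le_rfl⟩⟩
  have h2 : tailSum = fun t => ((∑' p : Nat.Primes, 1 / ((p : ℕ) : ℝ) ^ 2) - ∑ p ∈ primesUpTo t, 1 / (p : ℝ) ^ 2) / 2 := funext tail_eq
  rw [h2]
  have := (h.const_sub (∑' p : Nat.Primes, 1 / ((p : ℕ) : ℝ) ^ 2)).div_const 2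
  simpa using this

lemma C1_nonneg : 0 ≤ C1 := tsum_nonneg (fun j => by positivity)

lemma tail_bound (F : ℝ → ℝ)
    (hF : ∀ Δ : ℝ, Δ ≠ 0 →
      Tendsto (fun u : ℝ => ∑ p ∈ primesUpTo u, Real.cos (Δ * Real.log p) / p)
        atTop (nhds (F Δ))) (M : ℕ) (hM : 1 ≤ M) (T : ℝ) (hT : 2 ^ 13 ≤ T) :
    AEStronglyMeasurable (fun s => F s - ∑ p ∈ primesUpTo M, Real.cos (s * Real.log p) / p) (volume.restrict (Set.Ioc 0 T)) ∧
    IntervalIntegrable (fun s => (F s - ∑ p ∈ primesUpTo M, Real.cos (s * Real.log p) / p) ^ 2) volume 0 T ∧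
    ∫ s in (0:ℝ)..T, (F s - ∑ p ∈ primesUpTo M, Real.cos (s * Real.log p) / p) ^ 2 ≤
      4 * (C0 * (2 * (1 + 2 * Real.log T) + T / M + 330 * C1)) := by
  have hT0 : 0 < T := by linarith
  have hl : 0 ≤ Real.log T := Real.log_nonneg (by linarith)
  apply fatou_sq T _ hT0.le _
    (fun n s => ∑ p ∈ primesUpTo (n:ℝ), Real.cos (s * Real.log p) / p - ∑ p ∈ primesUpTo M, Real.cos (s * Real.log p) / p)
  · intro n; fun_prop
  · intro s hs
    exact ((hF s hs).comp tendsto_natCast_atTop_atTop).sub_const _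
  · filter_upwards [eventually_ge_atTop M] with n hn
    have hsub : primesUpTo (M:ℝ) ⊆ primesUpTo (n:ℝ) := pUT_mono (by exact_mod_cast hn)
    have e : ∀ s : ℝ, ∑ p ∈ primesUpTo (n:ℝ), Real.cos (s * Real.log p) / p - ∑ p ∈ primesUpTo M, Real.cos (s * Real.log p) / p
      = ∑ p ∈ primesUpTo (n:ℝ) \ primesUpTo (M:ℝ), Real.cos (s * Real.log p) / p := by
      intro s
      rw [← Finset.sum_sdiff hsub]; ring
    simp_rw [e]
    have hp : ∀ q ∈ primesUpTo (n:ℝ) \ primesUpTo (M:ℝ), q.Prime ∧ M < q := by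
      intro q hq
      rw [Finset.mem_sdiff, mem_pUT, mem_pUT] at hq
      refine ⟨hq.1.1, ?_⟩
      by_contra h
      exact hq.2 ⟨hq.1.1, by exact_mod_cast not_lt.mp h⟩
    have a1 := int_bound T hT0 _ (fun q hq => (hp q hq).1.one_lt.le)
    have a2 := dbl T hT M hM _ (fun q hq => (hp q hq).1) (fun q hq => (hp q hq).2)
    linarith
  · have := C0_nonneg
    have := C1_nonneg
    positivity

lemma comb (T η : ℝ) (hT : 0 ≤ T) (hη : 0 < η) (A B : ℝ → ℝ) (hA : Continuous A)
    (hBm : AEStronglyMeasurable B (volume.restrict (Set.Ioc 0 T)))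
    (hB : IntervalIntegrable (fun s => B s ^ 2) volume 0 T) :
    |(∫ s in (0:ℝ)..T, (A s + B s) ^ 2) - ∫ s in (0:ℝ)..T, A s ^ 2| ≤
      η * (∫ s in (0:ℝ)..T, A s ^ 2) + (1 + 1 / η) * ∫ s in (0:ℝ)..T, B s ^ 2 := by
  have hA2 : IntervalIntegrable (fun s => A s ^ 2) volume 0 T := (by fun_prop : Continuous _).intervalIntegrable _ _
  have hAB : IntervalIntegrable (fun s => (A s + B s) ^ 2) volume 0 T := by
    rw [intervalIntegrable_iff_integrableOn_Ioc_of_le hT] at hA2 hB ⊢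
    refine Integrable.mono' ((hA2.const_mul 2).add (hB.const_mul 2)) ((hA.aestronglyMeasurable.add hBm).pow 2) ?_
    refine ae_of_all _ (fun s => ?_)
    simp only [Real.norm_eq_abs, Pi.add_apply]
    rw [abs_of_nonneg (by positivity)]
    nlinarith [sq_nonneg (A s - B s)]
  have key : ∀ a b : ℝ, |2 * a * b| ≤ η * a ^ 2 + (1 / η) * b ^ 2 := by
    intro a b
    have h1 : η * a ^ 2 + (1 / η) * b ^ 2 - 2 * a * b = (η * a - b) ^ 2 / η := by field_simp; ring
    have h2 : η * a ^ 2 + (1 / η) * b ^ 2 + 2 * a * b = (η * a + b) ^ 2 / η := by field_simp; ring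
    have h3 : 0 ≤ (η * a - b) ^ 2 / η := by positivity
    have h4 : 0 ≤ (η * a + b) ^ 2 / η := by positivity
    rw [abs_le]; constructor <;> linarith
  rw [← intervalIntegral.integral_sub hAB hA2, ← intervalIntegral.integral_const_mul, ← intervalIntegral.integral_const_mul,
    ← intervalIntegral.integral_add (hA2.const_mul η) (hB.const_mul _)]
  refine (intervalIntegral.abs_integral_le_integral_abs hT).trans ?_
  apply intervalIntegral.integral_mono_on hT (hAB.sub hA2).abs ((hA2.const_mul η).add (hB.const_mul _))
  intro s _
  have e : (A s + B s) ^ 2 - A s ^ 2 = 2 * A s * B s + B s ^ 2 := by ring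
  rw [e]
  refine (abs_add_le _ _).trans ?_
  rw [abs_of_nonneg (sq_nonneg (B s))]
  linarith [key (A s) (B s)]

theorem stmt10 (t : ℝ) (ht : 0 < t) (F : ℝ → ℝ)
    (hF : ∀ Δ : ℝ, Δ ≠ 0 →
      Tendsto (fun u : ℝ => ∑ p ∈ primesUpTo u, Real.cos (Δ * Real.log p) / p)
        atTop (nhds (F Δ))) :
    Tendsto
      (fun T : ℝ => (1 / T) *
        ∫ Δ in (0:ℝ)..T, (∑ p ∈ primesUpTo t, Real.cos (Δ * Real.log p) / p - F Δ) ^ 2)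
      atTop (nhds (tailSum t)) ∧
    tailSum t =
      ((∑' p : Nat.Primes, 1 / ((p : ℕ) : ℝ) ^ 2) - ∑ p ∈ primesUpTo t, 1 / (p : ℝ) ^ 2) / 2 ∧
    Tendsto tailSum atTop (nhds 0) := by
  refine ⟨?_, tail_eq t, tail_lim⟩
  rw [Metric.tendsto_nhds]
  intro ε hε
  set m := tailSum t with hm
  have hm0 : 0 ≤ m := tail_nonneg t
  obtain ⟨η, hη, hη2⟩ : ∃ η : ℝ, 0 < η ∧ η * (m + 1) = ε / 8 := ⟨ε / 8 / (m + 1), by positivity, by field_simp⟩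
  set c := 1 + 1 / η with hc
  have hc0 : 0 < c := by positivity
  have hM1 : ∀ᶠ M : ℕ in atTop, tailSum (M:ℝ) < ε / 4 :=
    (tail_lim.comp tendsto_natCast_atTop_atTop).eventually (gt_mem_nhds (by positivity))
  have hM2 : ∀ᶠ M : ℕ in atTop, c * (4 * C0 / (M:ℝ)) < ε / 4 := by
    have := (tendsto_const_div_atTop_nhds_zero_nat (4 * C0)).const_mul c
    rw [mul_zero] at this
    exact this.eventually (gt_mem_nhds (by positivity))
  have hM3 : ∀ᶠ M : ℕ in atTop, t ≤ (M:ℝ) := tendsto_natCast_atTop_atTop.eventually (eventually_ge_atTop t)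
  obtain ⟨M, hM1, hM2, hM3, hM4⟩ := (hM1.and (hM2.and (hM3.and (eventually_ge_atTop 1)))).exists
  have hsub : primesUpTo t ⊆ primesUpTo (M:ℝ) := pUT_mono hM3
  set Q := primesUpTo (M:ℝ) \ primesUpTo t with hQ
  have hmean := mean_finite Q (fun q hq => by
    rw [hQ, Finset.mem_sdiff, mem_pUT] at hq; exact hq.1.1.two_le)
  have hmQ : (1/2) * ∑ p ∈ Q, 1 / (p:ℝ) ^ 2 = m - tailSum (M:ℝ) := by
    rw [hm, tail_eq t, tail_eq (M:ℝ), ← Finset.sum_sdiff hsub]; ring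
  rw [hmQ] at hmean
  have hA := (Metric.tendsto_nhds.mp hmean) (min (ε / 4) 1) (by positivity)
  have hK : Tendsto (fun T : ℝ => c * ((1 / T) * (4 * (C0 * (2 * (1 + 2 * Real.log T) + T / M + 330 * C1))))) atTop
      (nhds (c * (4 * C0 / (M:ℝ)))) := by
    have l1 : Tendsto (fun T : ℝ => Real.log T / T) atTop (nhds 0) := by
      simpa using Real.isLittleO_log_id_atTop.tendsto_div_nhds_zero
    have l2 : Tendsto (fun T : ℝ => 1 / T) atTop (nhds 0) := by simpa using tendsto_inv_atTop_zero (𝕜 := ℝ)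
    have l3 := (((l1.const_mul (16 * C0)).add (l2.const_mul (4 * C0 * (2 + 330 * C1)))).add_const (4 * C0 / (M:ℝ))).const_mul c
    simp only [mul_zero, add_zero, zero_add] at l3
    refine l3.congr' ?_
    filter_upwards [eventually_gt_atTop 0] with T hT
    field_simp
    ring
  have hK' := hK.eventually (gt_mem_nhds hM2)
  filter_upwards [hA, hK', eventually_ge_atTop (2 ^ 13)] with T h1 h2 h3
  have hT0 : 0 < T := by linarith
  obtain ⟨b1, b2, b3⟩ := tail_bound F hF M hM4 T h3
  have hcomb := comb T η hT0.le hη (fun s => ∑ p ∈ Q, Real.cos (s * Real.log p) / p) _ (by fun_prop) b1 b2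
  have e : ∀ s : ℝ, (∑ p ∈ primesUpTo t, Real.cos (s * Real.log p) / p - F s) ^ 2 =
      (∑ p ∈ Q, Real.cos (s * Real.log p) / p + (F s - ∑ p ∈ primesUpTo (M:ℝ), Real.cos (s * Real.log p) / p)) ^ 2 := by
    intro s
    rw [← Finset.sum_sdiff hsub]; ring
  simp_rw [e]
  set If := ∫ s in (0:ℝ)..T, (∑ p ∈ Q, Real.cos (s * Real.log p) / p + (F s - ∑ p ∈ primesUpTo (M:ℝ), Real.cos (s * Real.log p) / p)) ^ 2
  set IA := ∫ s in (0:ℝ)..T, (∑ p ∈ Q, Real.cos (s * Real.log p) / p) ^ 2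
  set IB := ∫ s in (0:ℝ)..T, (F s - ∑ p ∈ primesUpTo (M:ℝ), Real.cos (s * Real.log p) / p) ^ 2
  have hT1 : 0 < 1 / T := by positivity
  have g1 : |1 / T * If - 1 / T * IA| ≤ η * (1 / T * IA) + c * (1 / T * IB) := by
    rw [← mul_sub, abs_mul, abs_of_pos hT1]
    calc _ ≤ 1 / T * (η * IA + c * IB) := by gcongr
      _ = _ := by ring
  have g2 : c * (1 / T * IB) < ε / 4 := by
    refine lt_of_le_of_lt ?_ h2
    gcongr
  rw [Real.dist_eq] at h1 ⊢
  have h1a := h1.trans_le (min_le_left _ _)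
  have h1b := h1.trans_le (min_le_right _ _)
  have htM := tail_nonneg (M:ℝ)
  have g3 : η * (1 / T * IA) ≤ ε / 8 := by
    rw [← hη2]
    gcongr
    have := (abs_lt.mp h1b).2
    linarith
  have g4 := abs_le.mp g1
  have g5 := abs_lt.mp h1a
  rw [abs_lt]
  constructor <;> linarith
end

section
/- ∑_{n=2}^∞ (ζ(n) − 1)/n = 1 − γ, where ζ is the Riemann zeta function (so ζ(n) = ∑_{k=1}^∞ k^{-n} for integers n ≥ 2) and γ is the Euler–Mascheroni constant. -/
open Filter Topology in
theorem aux_inner (k : ℕ) : HasSum (fun n : ℕ => (1 / ((k : ℝ) + 2)) ^ (n + 2) / ((n : ℝ) + 2))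
    (Real.log (k + 2) - Real.log (k + 1) - 1 / ((k : ℝ) + 2)) := by
  have hk : (0 : ℝ) ≤ k := Nat.cast_nonneg k
  have h1 : |1 / ((k : ℝ) + 2)| < 1 := by
    rw [abs_of_pos (by positivity), div_lt_one (by positivity)]; linarith
  have h := Real.hasSum_pow_div_log_of_abs_lt_one h1
  rw [← hasSum_nat_add_iff' 1] at h
  have e : 1 - 1 / ((k : ℝ) + 2) = (k + 1) / (k + 2) := by field_simp; ring
  rw [e, Real.log_div (by positivity) (by positivity)] at h
  convert! h using 1
  · funext n
    push_cast
    congr 1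
    ring
  · simp

open Filter Topology in
theorem aux_outer : HasSum (fun k : ℕ => Real.log (k + 2) - Real.log (k + 1) - 1 / ((k : ℝ) + 2))
    (1 - Real.eulerMascheroniConstant) := by
  rw [hasSum_iff_tendsto_nat_of_nonneg]
  · have h := (Real.tendsto_harmonic_sub_log.comp (tendsto_add_atTop_nat 1)).const_sub 1
    refine h.congr fun n => ?_
    simp only [Function.comp]
    induction n with
    | zero => simp [harmonic]
    | succ m ih =>
      rw [Finset.sum_range_succ, ← ih, harmonic_succ (m + 1)]
      push_cast
      rw [show (m : ℝ) + 1 + 1 = m + 2 by ring]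
      rw [one_div]
      ring
  · intro k
    exact (aux_inner k).nonneg fun n => by positivity

theorem aux_zeta (n : ℕ) : HasSum (fun k : ℕ => (1 / ((k : ℝ) + 2)) ^ (n + 2) / ((n : ℝ) + 2))
    (((riemannZeta ((n : ℂ) + 2)).re - 1) / ((n : ℝ) + 2)) := by
  apply HasSum.div_const
  have hs : Summable (fun k : ℕ => 1 / (k : ℝ) ^ (n + 2)) :=
    Real.summable_one_div_nat_pow.mpr (by omega)
  have hz : (riemannZeta ((n : ℂ) + 2)).re = ∑' k : ℕ, 1 / (k : ℝ) ^ (n + 2) := by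
    have := zeta_nat_eq_tsum_of_gt_one (k := n + 2) (by omega)
    push_cast at this
    rw [this, ← Complex.ofReal_re (∑' k : ℕ, 1 / (k : ℝ) ^ (n + 2))]
    push_cast
    rfl
  have h := hs.hasSum
  rw [← hz, ← hasSum_nat_add_iff' 2] at h
  convert! h using 1
  · funext k
    push_cast
    rw [one_div_pow]
  · simp [Finset.sum_range_succ]

theorem stmt13 :
    ∑' n : ℕ, ((riemannZeta ((n : ℂ) + 2)).re - 1) / ((n : ℝ) + 2) =
      1 - Real.eulerMascheroniConstant := by
  have hs : Summable (fun p : ℕ × ℕ => (1 / ((p.1 : ℝ) + 2)) ^ (p.2 + 2) / ((p.2 : ℝ) + 2)) := by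
    rw [summable_prod_of_nonneg (fun p => by positivity)]
    refine ⟨fun k => (aux_inner k).summable, ?_⟩
    simp only [fun k => (aux_inner k).tsum_eq]
    exact aux_outer.summable
  have h1 := (hs.hasSum.prod_fiberwise aux_inner).unique aux_outer
  have h2 := hs.hasSum
  rw [h1] at h2
  have h3 := (Equiv.prodComm ℕ ℕ).hasSum_iff.mpr h2
  exact (h3.prod_fiberwise aux_zeta).tsum_eq
end

section
/- ∫_0^∞ ( 1/(e^x − 1) − 1/(x e^x) ) dx = γ, where γ is the Euler–Mascheroni constant. -/
open Real Set Filter Topology MeasureTheory in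
lemma aux_G (n : ℕ) :
    IntegrableOn (fun x : ℝ => x⁻¹ • (exp (-(((n : ℝ) + 1) * x)) - exp (-(((n : ℝ) + 2) * x)))) (Ioi 0) ∧
    ∀ x : ℝ, 0 < x → 0 ≤ exp (-(((n : ℝ) + 1) * x)) -
      x⁻¹ • (exp (-(((n : ℝ) + 1) * x)) - exp (-(((n : ℝ) + 2) * x))) := by
  have key : ∀ x : ℝ, 0 < x →
      0 ≤ x⁻¹ • (exp (-(((n : ℝ) + 1) * x)) - exp (-(((n : ℝ) + 2) * x))) ∧
      x⁻¹ • (exp (-(((n : ℝ) + 1) * x)) - exp (-(((n : ℝ) + 2) * x))) ≤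
        exp (-(((n : ℝ) + 1) * x)) := by
    intro x hx
    have h1 : exp (-(((n : ℝ) + 2) * x)) = exp (-(((n : ℝ) + 1) * x)) * exp (-x) := by
      rw [← exp_add]; congr 1; ring
    have h2 : 1 - x ≤ exp (-x) := by linarith [add_one_le_exp (-x)]
    have h3 : exp (-x) ≤ 1 := exp_le_one_iff.2 (by linarith)
    have hE := exp_pos (-(((n : ℝ) + 1) * x))
    rw [h1, smul_eq_mul]
    constructor
    · apply mul_nonneg (by positivity); nlinarith
    · rw [inv_mul_le_iff₀ hx]; nlinarith
  refine ⟨?_, fun x hx => sub_nonneg.2 (key x hx).2⟩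
  have hE : IntegrableOn (fun x : ℝ => exp (-(((n : ℝ) + 1) * x))) (Ioi 0) := by
    have := exp_neg_integrableOn_Ioi 0 (b := (n : ℝ) + 1) (by positivity)
    simpa only [neg_mul] using this
  refine Integrable.mono' hE ?_ ?_
  · exact Measurable.aestronglyMeasurable (by fun_prop)
  · filter_upwards [ae_restrict_mem measurableSet_Ioi] with x hx
    rw [Real.norm_eq_abs, abs_of_nonneg (key x hx).1]
    exact (key x hx).2

open Real Set Filter Topology MeasureTheory in
theorem stmt14 :
    ∫ x in Set.Ioi (0 : ℝ), (1 / (Real.exp x - 1) - 1 / (x * Real.exp x)) =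
      Real.eulerMascheroniConstant := by
  let F : ℕ → ℝ → ℝ := fun n x => exp (-(((n : ℝ) + 1) * x)) -
      x⁻¹ • (exp (-(((n : ℝ) + 1) * x)) - exp (-(((n : ℝ) + 2) * x)))
  have hE : ∀ n : ℕ, IntegrableOn (fun x : ℝ => exp (-(((n : ℝ) + 1) * x))) (Ioi 0) := by
    intro n
    have := exp_neg_integrableOn_Ioi 0 (b := (n : ℝ) + 1) (by positivity)
    simpa only [neg_mul] using this
  have hFint : ∀ n, IntegrableOn (F n) (Ioi 0) := fun n => (hE n).sub (aux_G n).1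
  have hFval : ∀ n : ℕ, ∫ x in Ioi 0, F n x =
      ((n : ℝ) + 1)⁻¹ - (log ((n : ℝ) + 2) - log ((n : ℝ) + 1)) := by
    intro n
    have h1 : ∫ x in Ioi (0 : ℝ), exp (-(((n : ℝ) + 1) * x)) = ((n : ℝ) + 1)⁻¹ := by
      have := integral_exp_mul_Ioi (a := -((n : ℝ) + 1)) (by linarith [n.cast_nonneg (α := ℝ)]) 0
      simp only [neg_mul] at this
      rw [this]
      rw [mul_zero, neg_zero, exp_zero, neg_div_neg_eq, one_div]
    have h2 := Frullani.integral_Ioi_eq (f := fun x : ℝ => exp (-x)) (a := (n : ℝ) + 1)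
      (b := (n : ℝ) + 2) (L := 1) (R := 0)
      ((by fun_prop : Continuous fun x : ℝ => exp (-x)).locallyIntegrable.locallyIntegrableOn _)
      (by positivity) (by positivity)
      (by
        have : Tendsto (fun x : ℝ => exp (-x)) (𝓝 0) (𝓝 (exp (-0))) :=
          (by fun_prop : Continuous fun x : ℝ => exp (-x)).tendsto 0
        rw [neg_zero, exp_zero] at this
        exact this.mono_left nhdsWithin_le_nhds)
      tendsto_exp_neg_atTop_nhds_zero (aux_G n).1
    rw [log_div (by positivity) (by positivity)] at h2
    rw [integral_sub (hE n) (aux_G n).1, h1, h2]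
    simp
  have hFnn : ∀ n, 0 ≤ ∫ x in Ioi 0, F n x := fun n =>
    setIntegral_nonneg measurableSet_Ioi (fun x hx => (aux_G n).2 x hx)
  have hnorm : ∀ n, ∫ x in Ioi 0, ‖F n x‖ = ∫ x in Ioi 0, F n x := fun n =>
    setIntegral_congr_fun measurableSet_Ioi (fun x hx => by
      simp only [Real.norm_eq_abs]; exact abs_of_nonneg ((aux_G n).2 x hx))
  have hs : HasSum (fun n => ∫ x in Ioi 0, F n x) eulerMascheroniConstant := by
    rw [hasSum_iff_tendsto_nat_of_nonneg hFnn]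
    refine tendsto_harmonic_sub_log_add_one.congr fun N => ?_
    induction N with
    | zero => simp
    | succ k ih =>
      rw [Finset.sum_range_succ, ← ih, hFval, harmonic_succ]
      push_cast
      rw [show (k : ℝ) + 1 + 1 = k + 2 by ring]
      ring
  have hs2 := hasSum_integral_of_summable_integral_norm (μ := volume.restrict (Ioi (0 : ℝ)))
    (F := F) hFint (by simp_rw [hnorm]; exact hs.summable)
  rw [← hs2.unique hs]
  refine setIntegral_congr_fun measurableSet_Ioi (fun x hx => ?_)
  have hx : 0 < x := hx
  have hr1 : exp (-x) < 1 := exp_lt_one_iff.2 (by linarith)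
  have hgeo := (hasSum_geometric_of_lt_one (exp_pos (-x)).le hr1).mul_right
    (exp (-x) * (1 - x⁻¹ * (1 - exp (-x))))
  have hF : (fun n => F n x) = fun n : ℕ =>
      exp (-x) ^ n * (exp (-x) * (1 - x⁻¹ * (1 - exp (-x)))) := by
    funext n
    have e1 : exp (-(((n : ℝ) + 1) * x)) = exp (-x) ^ n * exp (-x) := by
      rw [← exp_nat_mul, ← exp_add]; congr 1; ring
    have e2 : exp (-(((n : ℝ) + 2) * x)) = exp (-x) ^ n * exp (-x) * exp (-x) := by
      rw [← exp_nat_mul, ← exp_add, ← exp_add]; congr 1; ring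
    simp only [F, e1, e2, smul_eq_mul]
    ring
  change _ = ∑' n, F n x
  rw [hF, hgeo.tsum_eq, exp_neg]
  have h1 : 1 < exp x := one_lt_exp_iff.2 hx
  have h2 : exp x - 1 ≠ 0 := by linarith
  have h3 : 1 - (exp x)⁻¹ ≠ 0 := by
    rw [exp_neg] at hr1; linarith
  have h4 : (1 - (exp x)⁻¹)⁻¹ = exp x / (exp x - 1) := by
    rw [inv_eq_iff_eq_inv, inv_div]; field_simp
  rw [h4]
  field_simp
end

section
/- Let χ be a Dirichlet character modulo N. For every complex s with Re(s) > 1, ∑_{p prime} χ(p) p^{-s} = ∑_{n=1}^∞ (μ(n)/n) L_{χⁿ}(ns), where μ is the Möbius function, χⁿ is the n-th power character, and L_ψ(w) = ∑_{p prime} ∑_{k=1}^∞ ψ(p)^k p^{-kw}/k is the logarithm of the Dirichlet L-function L(w, ψ) given by its absolutely convergent Euler-product series (so exp(L_ψ(w)) = L(w, ψ) for Re(w) > 1); both series converge absolutely. -/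
/-- `L_ψ(w) = ∑_{p prime} ∑_{k ≥ 1} ψ(p)^k p^{-kw}/k`, the logarithm of the Dirichlet
L-function `L(w, ψ)` given by its absolutely convergent Euler-product series for `Re(w) > 1`. -/
noncomputable def logLSeries {N : ℕ} (ψ : DirichletCharacter ℂ N) (w : ℂ) : ℂ :=
  ∑' p : Nat.Primes, ∑' k : ℕ,
    (ψ ((p : ℕ) : ZMod N)) ^ (k + 1) * ((p : ℕ) : ℂ) ^ (-((k : ℂ) + 1) * w) / ((k : ℂ) + 1)

lemma aux_sum_moebius (m : ℕ) (hm : m ≠ 0) :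
    ∑ d ∈ m.divisorsAntidiagonal, (ArithmeticFunction.moebius d.1 : ℂ) = if m = 1 then 1 else 0 := by
  have h := congrArg (fun f : ArithmeticFunction ℂ => f m)
    (ArithmeticFunction.coe_moebius_mul_coe_zeta (R := ℂ))
  simp only [ArithmeticFunction.mul_apply, ArithmeticFunction.one_apply] at h
  rw [← h]
  refine Finset.sum_congr rfl fun d hd => ?_
  have : d.2 ≠ 0 := by
    rintro h0
    rw [Nat.mem_divisorsAntidiagonal, h0] at hd
    simp at hd
    omega
  simp [ArithmeticFunction.natCoe_apply, ArithmeticFunction.zeta_apply, this]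

noncomputable def auxG (a : ℂ) (n k : ℕ) : ℂ :=
  (ArithmeticFunction.moebius n : ℂ) / (n : ℂ) * (a ^ (n * k) / (k : ℂ))

lemma auxG_norm_le (a : ℂ) (ha : ‖a‖ ≤ 1 / 2) (n k : ℕ) :
    ‖auxG a (n + 1) (k + 1)‖ ≤ ‖a‖ * ((1 / 2 : ℝ) ^ n * (1 / 2 : ℝ) ^ k) := by
  have h1 : ‖(ArithmeticFunction.moebius (n + 1) : ℂ) / ((n + 1 : ℕ) : ℂ)‖ ≤ 1 := by
    rw [norm_div, Complex.norm_natCast, Complex.norm_intCast]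
    have h2 : |((ArithmeticFunction.moebius (n + 1) : ℤ) : ℝ)| ≤ 1 := by
      exact_mod_cast ArithmeticFunction.abs_moebius_le_one
    refine div_le_one_of_le₀ (h2.trans ?_) (by positivity)
    push_cast
    linarith [(Nat.cast_nonneg n : (0 : ℝ) ≤ n)]
  have h3 : ‖a ^ ((n + 1) * (k + 1)) / ((k + 1 : ℕ) : ℂ)‖ ≤ ‖a‖ ^ ((n + 1) * (k + 1)) := by
    rw [norm_div, Complex.norm_natCast, norm_pow]
    refine div_le_self (by positivity) ?_
    push_cast
    linarith [(Nat.cast_nonneg k : (0 : ℝ) ≤ k)]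
  have h4 : ‖a‖ ^ ((n + 1) * (k + 1)) ≤ ‖a‖ * ((1 / 2 : ℝ) ^ n * (1 / 2 : ℝ) ^ k) := by
    calc ‖a‖ ^ ((n + 1) * (k + 1)) ≤ ‖a‖ ^ (n + k + 1) := by
          refine pow_le_pow_of_le_one (norm_nonneg _) (by linarith) ?_
          nlinarith [Nat.zero_le (n * k)]
      _ = ‖a‖ * ‖a‖ ^ (n + k) := by ring
      _ ≤ ‖a‖ * (1 / 2 : ℝ) ^ (n + k) := by gcongr
      _ = _ := by rw [pow_add]
  unfold auxG
  rw [norm_mul]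
  calc _ ≤ 1 * ‖a‖ ^ ((n + 1) * (k + 1)) := by gcongr
    _ ≤ _ := by rw [one_mul]; exact h4

lemma aux_geom : Summable fun q : ℕ × ℕ => (1 / 2 : ℝ) ^ q.1 * (1 / 2 : ℝ) ^ q.2 :=
  Summable.mul_of_nonneg (summable_geometric_two) (summable_geometric_two)
    (fun _ => by positivity) (fun _ => by positivity)

lemma auxG_tsum (a : ℂ) (ha : ‖a‖ ≤ 1 / 2) :
    ∑' q : ℕ × ℕ, auxG a (q.1 + 1) (q.2 + 1) = a := by
  have hS : Summable fun q : ℕ × ℕ => auxG a (q.1 + 1) (q.2 + 1) :=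
    Summable.of_norm_bounded (aux_geom.mul_left ‖a‖) fun q => auxG_norm_le a ha q.1 q.2
  let e : (Σ n : ℕ+, Nat.divisorsAntidiagonal n) ≃ ℕ × ℕ :=
    sigmaAntidiagonalEquivProd.trans (Equiv.prodCongr Equiv.pnatEquivNat Equiv.pnatEquivNat)
  have he : ∀ x, auxG a ((e x).1 + 1) ((e x).2 + 1) = auxG a x.2.1.1 x.2.1.2 := by
    intro x
    have h1 : (e x).1 + 1 = x.2.1.1 := PNat.natPred_add_one (sigmaAntidiagonalEquivProd x).1
    have h2 : (e x).2 + 1 = x.2.1.2 := PNat.natPred_add_one (sigmaAntidiagonalEquivProd x).2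
    rw [h1, h2]
  have hS' := e.summable_iff.mpr hS
  rw [← e.tsum_eq]
  simp only [Function.comp_def, he] at hS' ⊢
  rw [hS'.tsum_sigma]
  have key : ∀ m : ℕ+, ∑' d : Nat.divisorsAntidiagonal m, auxG a d.1.1 d.1.2
      = if m = 1 then a else 0 := by
    intro m
    rw [Finset.tsum_subtype (Nat.divisorsAntidiagonal m) (fun d : ℕ × ℕ => auxG a d.1 d.2)]
    have : ∀ d ∈ (m : ℕ).divisorsAntidiagonal, auxG a d.1 d.2 =
        (ArithmeticFunction.moebius d.1 : ℂ) * (a ^ (m : ℕ) / (m : ℕ)) := by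
      intro d hd
      rw [Nat.mem_divisorsAntidiagonal] at hd
      rw [← hd.1, auxG]
      push_cast
      rw [div_mul_div_comm, mul_div_assoc]
    rw [Finset.sum_congr rfl this, ← Finset.sum_mul, aux_sum_moebius _ m.ne_zero]
    by_cases hm : m = 1
    · subst hm; simp
    · have : (m : ℕ) ≠ 1 := by simpa using hm
      simp [hm]
  rw [tsum_congr key, tsum_ite_eq]

lemma aux_norm_lt {N : ℕ} (ψ : DirichletCharacter ℂ N) (w : ℂ) (hw : 1 < w.re) (p : Nat.Primes) :
    ‖ψ ((p : ℕ) : ZMod N) * ((p : ℕ) : ℂ) ^ (-w)‖ ≤ 1 / 2 := by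
  rw [norm_mul, Complex.norm_natCast_cpow_of_pos p.2.pos]
  have h2 : (2 : ℝ) ≤ (p : ℕ) := by exact_mod_cast p.2.two_le
  calc _ ≤ 1 * ((p : ℕ) : ℝ) ^ (-w).re := by
        gcongr
        exact ψ.norm_le_one _
    _ ≤ ((p : ℕ) : ℝ) ^ (-1 : ℝ) := by
        rw [one_mul]
        exact Real.rpow_le_rpow_of_exponent_le (by linarith) (by simp; linarith)
    _ = 1 / ((p : ℕ) : ℝ) := by rw [Real.rpow_neg_one, one_div]
    _ ≤ 1 / 2 := by gcongr

lemma aux_pow {N : ℕ} (χ : DirichletCharacter ℂ N) (s : ℂ) (p n k : ℕ) :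
    ((χ ^ (n + 1)) (p : ZMod N)) ^ (k + 1) *
      (p : ℂ) ^ (-((k : ℂ) + 1) * (((n : ℂ) + 1) * s))
      = (χ (p : ZMod N) * (p : ℂ) ^ (-s)) ^ ((n + 1) * (k + 1)) := by
  rw [MulChar.pow_apply' _ n.succ_ne_zero, ← pow_mul, mul_pow, ← Complex.cpow_nat_mul]
  congr 2
  push_cast
  ring

lemma aux_exp {N : ℕ} (ψ : DirichletCharacter ℂ N) (w : ℂ) (hw : 1 < w.re) :
    Complex.exp (logLSeries ψ w) = LSeries (fun k => ψ (k : ZMod N)) w := by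
  rw [← DirichletCharacter.LSeries_eulerProduct_exp_log ψ hw, logLSeries]
  congr 1
  refine tsum_congr fun p => ?_
  have h := aux_norm_lt ψ w hw p
  rw [← (Complex.hasSum_taylorSeries_neg_log' (h.trans_lt (by norm_num))).tsum_eq]
  refine tsum_congr fun k => ?_
  have := aux_pow ψ w p 0 k
  simp only [Nat.cast_zero, zero_add, one_mul, pow_one] at this
  rw [this]

theorem stmt18 {N : ℕ} (χ : DirichletCharacter ℂ N) (s : ℂ) (hs : 1 < s.re) :
    (∀ (ψ : DirichletCharacter ℂ N) (w : ℂ), 1 < w.re →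
      Complex.exp (logLSeries ψ w) = LSeries (fun k => ψ (k : ZMod N)) w) ∧
    Summable (fun p : Nat.Primes => ‖χ ((p : ℕ) : ZMod N) * ((p : ℕ) : ℂ) ^ (-s)‖) ∧
    Summable (fun n : ℕ =>
      ‖((ArithmeticFunction.moebius (n + 1) : ℂ) / ((n : ℂ) + 1)) *
        logLSeries (χ ^ (n + 1)) (((n : ℂ) + 1) * s)‖) ∧
    ∑' p : Nat.Primes, χ ((p : ℕ) : ZMod N) * ((p : ℕ) : ℂ) ^ (-s) =
      ∑' n : ℕ, ((ArithmeticFunction.moebius (n + 1) : ℂ) / ((n : ℂ) + 1)) *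
        logLSeries (χ ^ (n + 1)) (((n : ℂ) + 1) * s) := by
  have hA : Summable (fun p : Nat.Primes => ‖χ ((p : ℕ) : ZMod N) * ((p : ℕ) : ℂ) ^ (-s)‖) :=
    (summable_dirichletSummand χ hs).subtype Nat.Prime
  set a : Nat.Primes → ℂ := fun p => χ ((p : ℕ) : ZMod N) * ((p : ℕ) : ℂ) ^ (-s) with ha_def
  have ha : ∀ p, ‖a p‖ ≤ 1 / 2 := aux_norm_lt χ s hs
  have hF : Summable fun x : Nat.Primes × (ℕ × ℕ) => auxG (a x.1) (x.2.1 + 1) (x.2.2 + 1) := by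
    refine Summable.of_norm_bounded (Summable.mul_of_nonneg hA aux_geom
      (fun _ => norm_nonneg _) (fun _ => by positivity)) fun x => ?_
    exact auxG_norm_le (a x.1) (ha x.1) x.2.1 x.2.2
  let e : ℕ × (Nat.Primes × ℕ) ≃ Nat.Primes × (ℕ × ℕ) :=
    { toFun := fun y => (y.2.1, y.1, y.2.2)
      invFun := fun x => (x.2.1, x.1, x.2.2)
      left_inv := fun _ => rfl
      right_inv := fun _ => rfl }
  have hG : Summable fun y : ℕ × (Nat.Primes × ℕ) => auxG (a y.2.1) (y.1 + 1) (y.2.2 + 1) :=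
    e.summable_iff.mpr hF
  have hterm : ∀ n : ℕ, ((ArithmeticFunction.moebius (n + 1) : ℂ) / ((n : ℂ) + 1)) *
        logLSeries (χ ^ (n + 1)) (((n : ℂ) + 1) * s) =
      ∑' y : Nat.Primes × ℕ, auxG (a y.1) (n + 1) (y.2 + 1) := by
    intro n
    rw [(hG.prod_factor n).tsum_prod, logLSeries, ← tsum_mul_left]
    refine tsum_congr fun p => ?_
    rw [← tsum_mul_left]
    refine tsum_congr fun k => ?_
    rw [aux_pow, auxG]
    push_cast
    rfl
  refine ⟨aux_exp, hA, ?_, ?_⟩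
  · simp only [hterm]
    exact hG.prod.norm
  · simp only [hterm]
    rw [← hG.tsum_prod]
    have h1 := e.tsum_eq (fun x : Nat.Primes × (ℕ × ℕ) => auxG (a x.1) (x.2.1 + 1) (x.2.2 + 1))
    refine Eq.trans ?_ h1.symm
    rw [hF.tsum_prod]
    exact tsum_congr fun p => (auxG_tsum (a p) (ha p)).symm
end

section
/- Let χ be a Dirichlet character modulo N and t > 0, and define P_{χ,t}(1/2+iτ) = ∑_{p ≤ t, p prime} χ(p) p^{-(1/2+iτ)}. Then for every real Δ, lim_{T→∞} (1/T) ∫_T^{2T} Re P_{χ,t}(1/2+i(τ+Δ)) · Re P_{χ,t}(1/2+iτ) dτ = (1/2) ∑_{p ≤ t, p prime, p ∤ N} cos(Δ log p)/p. -/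
open MeasureTheory Filter Real

/-- The truncated prime Dirichlet L-series
`P_{χ,t}(1/2 + iτ) = ∑_{p ≤ t} χ(p) p^{-(1/2+iτ)}`. -/
noncomputable def primeLTrunc {N : ℕ} (χ : DirichletCharacter ℂ N) (t : ℝ) (τ : ℝ) : ℂ :=
  ∑ p ∈ primesUpTo t, χ ((p : ℕ) : ZMod N) * (p : ℂ) ^ (-(1 / 2 + Complex.I * (τ : ℂ)))


lemma mean_cos_s19 (a c : ℝ) : Tendsto (fun T : ℝ => (1 / T) * ∫ τ in T..(2 * T), Real.cos (a * τ + c))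
    atTop (nhds (if a = 0 then Real.cos c else 0)) := by
  split_ifs with h
  · subst h
    refine tendsto_const_nhds.congr' ?_
    filter_upwards [eventually_gt_atTop 0] with T hT
    simp only [zero_mul, zero_add, intervalIntegral.integral_const, smul_eq_mul]
    field_simp
    ring
  · have h2 : Tendsto (fun T : ℝ => (2 / |a|) * T⁻¹) atTop (nhds 0) := by
      simpa using tendsto_inv_atTop_zero.const_mul (2 / |a|)
    refine squeeze_zero_norm' ?_ h2
    filter_upwards [eventually_gt_atTop 0] with T hT
    rw [intervalIntegral.integral_comp_mul_add (fun x => Real.cos x) h c, integral_cos]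
    rw [smul_eq_mul, norm_mul, norm_mul, norm_inv, Real.norm_eq_abs, Real.norm_eq_abs a,
      abs_of_pos (by positivity : 0 < 1 / T)]
    have h3 : ‖Real.sin (a * (2 * T) + c) - Real.sin (a * T + c)‖ ≤ 2 := by
      rw [Real.norm_eq_abs, abs_le]
      constructor <;> linarith [Real.sin_le_one (a * (2 * T) + c), Real.sin_le_one (a * T + c),
        Real.neg_one_le_sin (a * (2 * T) + c), Real.neg_one_le_sin (a * T + c)]
    have ha : 0 < |a| := abs_pos.mpr h
    calc 1 / T * (|a|⁻¹ * ‖Real.sin (a * (2 * T) + c) - Real.sin (a * T + c)‖)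
        ≤ 1 / T * (|a|⁻¹ * 2) := by gcongr
      _ = _ := by field_simp

lemma term_re (z : ℂ) (p : ℕ) (hp : 0 < p) (τ : ℝ) :
    (z * (p : ℂ) ^ (-(1 / 2 + Complex.I * (τ : ℂ)))).re =
      (‖z‖ * (p : ℝ) ^ (-(1 / 2) : ℝ)) * Real.cos (Real.log p * τ - Complex.arg z) := by
  have hp' : (p : ℂ) ≠ 0 := by exact_mod_cast hp.ne'
  have e : (p : ℂ) ^ (-(1 / 2 + Complex.I * (τ : ℂ))) =
      (((p : ℝ) ^ (-(1 / 2) : ℝ) : ℝ) : ℂ) *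
        Complex.exp (((-(Real.log p * τ) : ℝ) : ℂ) * Complex.I) := by
    rw [neg_add, Complex.cpow_add _ _ hp', Complex.ofReal_cpow (by positivity)]
    congr 1
    · push_cast; rfl
    · rw [Complex.cpow_def_of_ne_zero hp', ← Complex.natCast_log]
      congr 1
      push_cast
      ring
  rw [e]
  conv_lhs => rw [← Complex.norm_mul_exp_arg_mul_I z]
  rw [show ∀ a b c d : ℂ, a * b * (c * d) = (a * c) * (b * d) by intros; ring, ← Complex.exp_add,
    ← add_mul, ← Complex.ofReal_add, ← Complex.ofReal_mul, Complex.re_ofReal_mul,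
    Complex.exp_ofReal_mul_I_re, ← Real.cos_neg]
  congr 2
  ring

theorem stmt19 {N : ℕ} (χ : DirichletCharacter ℂ N) (t : ℝ) (ht : 0 < t) (Δ : ℝ) :
    Tendsto
      (fun T : ℝ => (1 / T) *
        ∫ τ in T..(2 * T), (primeLTrunc χ t (τ + Δ)).re * (primeLTrunc χ t τ).re)
      atTop
      (nhds ((1 / 2) *
        ∑ p ∈ (primesUpTo t).filter (fun p => ¬ p ∣ N), Real.cos (Δ * Real.log p) / p)) := by
  have hpr : ∀ p ∈ primesUpTo t, p.Prime := fun p hp => (Finset.mem_filter.mp hp).2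
  set r : ℕ → ℝ := fun p => ‖χ ((p : ℕ) : ZMod N)‖ * (p : ℝ) ^ (-(1 / 2) : ℝ) with hr
  set φ : ℕ → ℝ := fun p => Complex.arg (χ ((p : ℕ) : ZMod N)) with hφ
  have hre : ∀ τ, (primeLTrunc χ t τ).re =
      ∑ p ∈ primesUpTo t, r p * Real.cos (Real.log p * τ - φ p) := by
    intro τ
    rw [primeLTrunc, Complex.re_sum]
    exact Finset.sum_congr rfl fun p hp => term_re _ p (hpr p hp).pos τ
  have hprod : ∀ τ, (primeLTrunc χ t (τ + Δ)).re * (primeLTrunc χ t τ).re =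
      ∑ p ∈ primesUpTo t, ∑ q ∈ primesUpTo t, (r p * r q / 2) *
        (Real.cos ((Real.log p + Real.log q) * τ + (Real.log p * Δ - φ p - φ q)) +
         Real.cos ((Real.log p - Real.log q) * τ + (Real.log p * Δ - φ p + φ q))) := by
    intro τ
    rw [hre, hre, Finset.sum_mul_sum]
    refine Finset.sum_congr rfl fun p _ => Finset.sum_congr rfl fun q _ => ?_
    have h1 : (Real.log p + Real.log q) * τ + (Real.log p * Δ - φ p - φ q) =
      (Real.log p * (τ + Δ) - φ p) + (Real.log q * τ - φ q) := by ring
    have h2 : (Real.log p - Real.log q) * τ + (Real.log p * Δ - φ p + φ q) =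
      (Real.log p * (τ + Δ) - φ p) - (Real.log q * τ - φ q) := by ring
    rw [h1, h2, Real.cos_add, Real.cos_sub (Real.log p * (τ + Δ) - φ p)]
    ring
  have hint : ∀ a c T : ℝ, IntervalIntegrable (fun τ => Real.cos (a * τ + c)) volume T (2 * T) :=
    fun a c T => Continuous.intervalIntegrable (by fun_prop) _ _
  have hfun : (fun T : ℝ => (1 / T) *
        ∫ τ in T..(2 * T), (primeLTrunc χ t (τ + Δ)).re * (primeLTrunc χ t τ).re) =
      fun T : ℝ => ∑ p ∈ primesUpTo t, ∑ q ∈ primesUpTo t, (r p * r q / 2) *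
        ((1 / T) * (∫ τ in T..(2 * T),
          Real.cos ((Real.log p + Real.log q) * τ + (Real.log p * Δ - φ p - φ q))) +
         (1 / T) * ∫ τ in T..(2 * T),
          Real.cos ((Real.log p - Real.log q) * τ + (Real.log p * Δ - φ p + φ q))) := by
    funext T
    simp_rw [hprod]
    rw [intervalIntegral.integral_finsetSum
      (fun p _ => Continuous.intervalIntegrable (by fun_prop) _ _), Finset.mul_sum]
    refine Finset.sum_congr rfl fun p _ => ?_
    rw [intervalIntegral.integral_finsetSum
      (fun p _ => Continuous.intervalIntegrable (by fun_prop) _ _), Finset.mul_sum]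
    refine Finset.sum_congr rfl fun q _ => ?_
    rw [intervalIntegral.integral_const_mul, intervalIntegral.integral_add (hint _ _ _) (hint _ _ _)]
    ring
  have hlim : (1 / 2) *
        ∑ p ∈ (primesUpTo t).filter (fun p => ¬ p ∣ N), Real.cos (Δ * Real.log p) / p =
      ∑ p ∈ primesUpTo t, ∑ q ∈ primesUpTo t, (r p * r q / 2) *
        ((if Real.log p + Real.log q = 0 then Real.cos (Real.log p * Δ - φ p - φ q) else 0) +
         (if Real.log p - Real.log q = 0 then Real.cos (Real.log p * Δ - φ p + φ q) else 0)) := by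
    rw [Finset.mul_sum, Finset.sum_filter]
    refine Finset.sum_congr rfl fun p hp => ?_
    have hp0 := (hpr p hp).pos
    have hpR : (0 : ℝ) < p := by exact_mod_cast hp0
    have hlp : ∀ q ∈ primesUpTo t, 0 < Real.log q := fun q hq =>
      Real.log_pos (by exact_mod_cast (hpr q hq).one_lt)
    rw [Finset.sum_eq_single_of_mem p hp]
    · rw [if_neg (by linarith [hlp p hp] : ¬ (Real.log p + Real.log p = 0)), if_pos (sub_self _)]
      have hsq : (p : ℝ) ^ (-(1 / 2) : ℝ) * (p : ℝ) ^ (-(1 / 2) : ℝ) = 1 / p := by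
        rw [← Real.rpow_add hpR]
        norm_num [Real.rpow_neg_one]
      have hrr : r p * r p = ‖χ ((p : ℕ) : ZMod N)‖ ^ 2 * (1 / p) := by
        rw [← hsq]; simp only [hr]; ring
      rw [hrr, sub_add_cancel, zero_add]
      by_cases h : ¬ p ∣ N
      · rw [if_pos h]
        have hu : IsUnit ((p : ℕ) : ZMod N) :=
          (ZMod.isUnit_iff_coprime p N).mpr (((hpr p hp).coprime_iff_not_dvd).mpr h)
        obtain ⟨u, hu⟩ := hu
        rw [← hu, DirichletCharacter.unit_norm_eq_one, mul_comm Δ]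
        ring
      · rw [if_neg h]
        have hu : ¬ IsUnit ((p : ℕ) : ZMod N) := fun hu =>
          h (((hpr p hp).coprime_iff_not_dvd).mp ((ZMod.isUnit_iff_coprime p N).mp hu))
        rw [χ.map_nonunit hu]
        simp
    · intro q hq hqp
      rw [if_neg (by linarith [hlp p hp, hlp q hq]), if_neg]
      · simp
      · intro h
        have := Real.log_injOn_pos (Set.mem_Ioi.mpr hpR)
          (Set.mem_Ioi.mpr (by exact_mod_cast (hpr q hq).pos : (0 : ℝ) < q)) (sub_eq_zero.mp h)
        exact hqp (by exact_mod_cast this.symm)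
  rw [hfun, hlim]
  exact tendsto_finsetSum _ fun p _ => tendsto_finsetSum _ fun q _ =>
    ((mean_cos_s19 _ _).add (mean_cos_s19 _ _)).const_mul _
end
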